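/- arXiv:2502.04982 — 4 statements merged into one kernel-verified Lean document; each statement's English description precedes it below -/
import Mathlib

section
/- Let K(z) = z^⊥/(2π|z|²) on ℝ² \ {0}, z^⊥ = (−z₂,z₁), be the Biot–Savart kernel. For f ∈ L¹(ℝ²) and φ ∈ C_c^∞(ℝ²) define the symmetrized pairing B(f,φ) := (1/2) ∫∫_{x≠y} K(x−y)·(∇φ(x) − ∇φ(y)) f(x) f(y) dx dy. Then: (i) the integral converges absolutely and |B(f,φ)| ≤ (4π)^{-1} ‖D²φ‖_{L^∞} ‖f‖_{L¹}²; (ii) if f ∈ L¹(ℝ²) ∩ L^∞(ℝ²), then ∫_{ℝ²} (K∗f)(x)·∇φ(x) f(x) dx = B(f,φ), i.e. B(f,φ) represents the distribution −∇·((K∗f) f) tested against φ; (iii) if f^n ⇀ f weakly in L¹(ℝ²), i.e. ∫ f^n g → ∫ f g for every g ∈ L^∞(ℝ²), then B(f^n,φ) → B(f,φ) for every φ ∈ C_c^∞(ℝ²). -/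
/-!
Write `H(x,y) = K(x−y)·(∇φ(x) − ∇φ(y))` (`symKer`). Since `|K(z)| = (2π|z|)⁻¹` and `∇φ` is
Lipschitz with constant `‖D²φ‖_∞`, `H` is bounded by `(2π)⁻¹ ‖D²φ‖_∞` (`abs_symKer_le`), so
integrating `H` against `f ⊗ f` gives the absolute convergence and the bound.

For bounded `f`, the one-sided integrand `K(x−y)·∇φ(x) f(x) f(y)` is already absolutely integrable
(`integrable_oneSided`), because `K` is the sum of an integrable and a bounded function. Fubini
identifies its integral with `∫ (K∗f)·∇φ f`, and since `K` is odd, averaging it with its image under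
`(x,y) ↦ (y,x)` produces `H(x,y) f(x) f(y) / 2`.

For weak continuity, let `u n = fs n - f` be weakly null and `T g (x) = ∫ H(x,y) g(y) dy`. Then
`T (u n) → 0` pointwise, as `H(x,·)` is bounded, and `T (u n)` is uniformly bounded because `u n` is
bounded in `L¹` (`l1_bounded`). The only quadratic error term, `∫ u n · T (u n)`, tends to zero since
weakly null sequences in `L¹` are equi-integrable; this is `pair_tendsto_zero`. It rests on
`equi_small`, a Baire category argument on the unit ball of `L^∞` with an `L¹` metric.
-/

open Real MeasureTheory Set Filter Topology Metric
open scoped BigOperators ENNReal RealInnerProductSpace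

noncomputable section

/-- `ℝ²` with the Euclidean norm. -/
abbrev E2 : Type := EuclideanSpace ℝ (Fin 2)

/-- The Biot–Savart kernel `K(z) = z^⊥ / (2π |z|²)` on `ℝ²` (with the convention
`K(0) = 0`, coming from `(0)⁻¹ = 0`). -/
def biotSavart (z : E2) : E2 :=
  (2 * π * ‖z‖ ^ 2)⁻¹ •
    (EuclideanSpace.single (0 : Fin 2) (-(z 1)) + EuclideanSpace.single (1 : Fin 2) (z 0))

/-- Convolution `(K ∗ f)(x) = ∫ K(x−y) f(y) dy`. -/
def biotVel (f : E2 → ℝ) (x : E2) : E2 := ∫ y, f y • biotSavart (x - y)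

/-- Symmetrized Biot–Savart pairing
`B(f,φ) = (1/2) ∬ K(x−y)·(∇φ(x) − ∇φ(y)) f(x) f(y) dx dy`. -/
def Bpair (f φ : E2 → ℝ) : ℝ :=
  (1 / 2) * ∫ q : E2 × E2,
    ⟪biotSavart (q.1 - q.2), gradient φ q.1 - gradient φ q.2⟫ * (f q.1 * f q.2)

/-- Infinitely differentiable function. -/
def IsSmoothFn (φ : E2 → ℝ) : Prop := ∀ k : ℕ, ContDiff ℝ k φ

/-! ### The kernel and its symmetrization -/

lemma norm_biotSavart (z : E2) : ‖biotSavart z‖ = (2 * π)⁻¹ * ‖z‖⁻¹ := by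
  have h : ‖(EuclideanSpace.single (0 : Fin 2) (-(z 1)) +
      EuclideanSpace.single (1 : Fin 2) (z 0) : E2)‖ = ‖z‖ := by
    rw [EuclideanSpace.norm_eq, EuclideanSpace.norm_eq]
    simp [Fin.sum_univ_two, add_comm]
  rw [biotSavart, norm_smul, h, norm_inv, Real.norm_of_nonneg (by positivity)]
  rcases eq_or_ne ‖z‖ 0 with h0 | h0
  · simp [h0]
  · field_simp

lemma biotSavart_neg (z : E2) : biotSavart (-z) = -biotSavart z := by
  ext i
  fin_cases i <;> simp [biotSavart]

lemma measurable_biotSavart : Measurable biotSavart := by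
  have h : Measurable fun z : E2 => (EuclideanSpace.single (0 : Fin 2) (-(z 1)) +
      EuclideanSpace.single (1 : Fin 2) (z 0) : E2) := by
    have : (fun z : E2 => (EuclideanSpace.single (0 : Fin 2) (-(z 1)) +
      EuclideanSpace.single (1 : Fin 2) (z 0) : E2)) = fun z => !₂[-(z 1), z 0] := by
      ext z i
      fin_cases i <;> simp
    rw [this]
    refine Continuous.measurable ?_
    fun_prop
  exact Measurable.smul (f := fun z : E2 => (2 * π * ‖z‖ ^ 2)⁻¹) (by fun_prop) h

lemma norm_gradient_sub (φ : E2 → ℝ) (x y : E2) :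
    ‖gradient φ x - gradient φ y‖ = ‖fderiv ℝ φ x - fderiv ℝ φ y‖ := by
  rw [gradient, gradient, ← map_sub, LinearIsometryEquiv.norm_map]

lemma continuous_gradient {φ : E2 → ℝ} (hφ : IsSmoothFn φ) : Continuous (gradient φ) :=
  (InnerProductSpace.toDual ℝ E2).symm.continuous.comp ((hφ 1).continuous_fderiv (by norm_num))

lemma bddAbove_hessian {φ : E2 → ℝ} (hφ : IsSmoothFn φ) (hc : HasCompactSupport φ) :
    BddAbove (range fun x : E2 => ‖iteratedFDeriv ℝ 2 φ x‖) :=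
  ((hφ 2).continuous_iteratedFDeriv (m := 2) (by norm_num)).norm.bddAbove_range_of_hasCompactSupport
    (hc.iteratedFDeriv 2).norm

lemma exists_gradient_bound {φ : E2 → ℝ} (hφ : IsSmoothFn φ) (hc : HasCompactSupport φ) :
    ∃ C : ℝ, ∀ x, ‖gradient φ x‖ ≤ C := by
  obtain ⟨C, hC⟩ := (hc.fderiv ℝ).exists_bound_of_continuous
    ((hφ 1).continuous_fderiv (by norm_num))
  refine ⟨C, fun x => ?_⟩
  rw [gradient, LinearIsometryEquiv.norm_map]
  exact hC x

/-- Mean value inequality for `fderiv ℝ φ`; finiteness of the supremum, which comes from the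
compact support, is what makes `⨆` the actual `L^∞` norm of `D²φ`. -/
lemma gradient_lipschitz {φ : E2 → ℝ} (hφ : IsSmoothFn φ) (hc : HasCompactSupport φ) (x y : E2) :
    ‖gradient φ x - gradient φ y‖ ≤ (⨆ x : E2, ‖iteratedFDeriv ℝ 2 φ x‖) * ‖x - y‖ := by
  rw [norm_gradient_sub]
  refine Convex.norm_image_sub_le_of_norm_fderiv_le (𝕜 := ℝ) (s := univ)
    (fun z _ => ?_) (fun z _ => ?_) convex_univ (mem_univ y) (mem_univ x)
  · exact (((hφ 2).fderiv_right (m := 1) (by norm_num)).differentiable (by norm_num)) z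
  · rw [← norm_iteratedFDeriv_one, norm_iteratedFDeriv_fderiv]
    exact le_ciSup (bddAbove_hessian hφ hc) z

/-- The symmetrized kernel `H(x,y) = K(x−y)·(∇φ(x) − ∇φ(y))`. -/
def symKer (φ : E2 → ℝ) (q : E2 × E2) : ℝ :=
  ⟪biotSavart (q.1 - q.2), gradient φ q.1 - gradient φ q.2⟫

lemma measurable_symKer {φ : E2 → ℝ} (hφ : IsSmoothFn φ) : Measurable (symKer φ) := by
  have hg := (continuous_gradient hφ).measurable
  exact (measurable_biotSavart.comp (measurable_fst.sub measurable_snd)).inner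
    ((hg.comp measurable_fst).sub (hg.comp measurable_snd))

/-- The Lipschitz bound on `∇φ` cancels the singularity of `K` at the diagonal; on the diagonal
itself the kernel vanishes. -/
lemma abs_symKer_le {φ : E2 → ℝ} (hφ : IsSmoothFn φ) (hc : HasCompactSupport φ) (q : E2 × E2) :
    |symKer φ q| ≤ (2 * π)⁻¹ * (⨆ x : E2, ‖iteratedFDeriv ℝ 2 φ x‖) := by
  have hL : 0 ≤ ⨆ x : E2, ‖iteratedFDeriv ℝ 2 φ x‖ := Real.iSup_nonneg fun _ => norm_nonneg _
  calc |symKer φ q| ≤ ‖biotSavart (q.1 - q.2)‖ * ‖gradient φ q.1 - gradient φ q.2‖ :=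
        abs_real_inner_le_norm _ _
    _ ≤ ((2 * π)⁻¹ * ‖q.1 - q.2‖⁻¹) *
          ((⨆ x : E2, ‖iteratedFDeriv ℝ 2 φ x‖) * ‖q.1 - q.2‖) := by
        rw [norm_biotSavart]
        gcongr
        exact gradient_lipschitz hφ hc _ _
    _ = (2 * π)⁻¹ * (⨆ x : E2, ‖iteratedFDeriv ℝ 2 φ x‖) * (‖q.1 - q.2‖⁻¹ * ‖q.1 - q.2‖) := by
        ring
    _ ≤ (2 * π)⁻¹ * (⨆ x : E2, ‖iteratedFDeriv ℝ 2 φ x‖) * 1 := by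
        gcongr
        exact inv_mul_le_one
    _ = _ := mul_one _

lemma integrable_symKer_mul {φ f g : E2 → ℝ} (hφ : IsSmoothFn φ) (hc : HasCompactSupport φ)
    (hf : Integrable f volume) (hg : Integrable g volume) :
    Integrable (fun q : E2 × E2 => symKer φ q * (f q.1 * g q.2)) (volume.prod volume) :=
  (hf.mul_prod hg).bdd_mul (measurable_symKer hφ).aestronglyMeasurable
    (Eventually.of_forall (abs_symKer_le hφ hc))

lemma abs_Bpair_le {φ f : E2 → ℝ} (hφ : IsSmoothFn φ) (hc : HasCompactSupport φ)
    (hf : Integrable f volume) :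
    |Bpair f φ| ≤ (4 * π)⁻¹ * (⨆ x : E2, ‖iteratedFDeriv ℝ 2 φ x‖) * (∫ x, |f x|) ^ 2 := by
  have h1 : |∫ q : E2 × E2, symKer φ q * (f q.1 * f q.2) ∂(volume.prod volume)| ≤
      ∫ q : E2 × E2, (2 * π)⁻¹ * (⨆ x : E2, ‖iteratedFDeriv ℝ 2 φ x‖) * (|f q.1| * |f q.2|)
        ∂(volume.prod volume) := by
    refine norm_integral_le_of_norm_le (f := fun q : E2 × E2 => symKer φ q * (f q.1 * f q.2))
      ((hf.abs.mul_prod hf.abs).const_mul _) (Eventually.of_forall fun q => ?_)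
    rw [Real.norm_eq_abs, abs_mul, abs_mul]
    gcongr
    exact abs_symKer_le hφ hc q
  rw [integral_const_mul, integral_prod_mul (fun x => |f x|) (fun x => |f x|)] at h1
  have h2 : Bpair f φ = 1 / 2 *
      ∫ q : E2 × E2, symKer φ q * (f q.1 * f q.2) ∂(volume.prod volume) := rfl
  rw [h2, abs_mul, abs_of_pos (by norm_num : (0 : ℝ) < 1 / 2)]
  refine (mul_le_mul_of_nonneg_left h1 (by norm_num)).trans_eq ?_
  have := Real.pi_ne_zero
  field_simp
  ring

/-! ### Bounded densities: unfolding the symmetrization -/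

/-- The part of `2π |K|` near the origin: `1 / |z|` for `|z| ≤ 1`, and `0` elsewhere. -/
def nearKer (z : E2) : ℝ := (Iic (1 : ℝ)).indicator (fun r => r⁻¹) ‖z‖

/-- In polar coordinates the Jacobian `r` cancels `1 / r`. -/
lemma integrable_nearKer : Integrable nearKer volume := by
  refine (integrable_fun_norm_addHaar (volume : Measure E2)
    (f := (Iic (1 : ℝ)).indicator fun r => r⁻¹)).2 ?_
  have h : IntegrableOn (fun _ : ℝ => (1 : ℝ)) (Ioc 0 1) := by simp
  have h2 := (integrable_indicator_iff measurableSet_Ioc).2 h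
  refine h2.integrableOn.congr_fun (fun r hr => ?_) measurableSet_Ioi
  have hr0 : (0 : ℝ) < r := hr
  by_cases h1 : r ≤ 1
  · simp [indicator, hr0, h1, hr0.ne']
  · simp [indicator, h1]

lemma norm_biotSavart_le (z : E2) : ‖biotSavart z‖ ≤ nearKer z + 1 := by
  have hp : (2 * π)⁻¹ ≤ 1 := inv_le_one_of_one_le₀ (by linarith [Real.pi_gt_three])
  rw [norm_biotSavart, nearKer]
  have h0 : 0 ≤ ‖z‖⁻¹ := by positivity
  have h1 : (2 * π)⁻¹ * ‖z‖⁻¹ ≤ ‖z‖⁻¹ := mul_le_of_le_one_left h0 hp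
  by_cases h : ‖z‖ ≤ 1
  · simp only [indicator, mem_Iic, h, if_true]
    linarith
  · simp only [indicator, mem_Iic, h, if_false]
    linarith [inv_le_one_of_one_le₀ (not_le.1 h).le]

lemma nearKer_nonneg (z : E2) : 0 ≤ nearKer z :=
  indicator_apply_nonneg fun _ => inv_nonneg.2 (norm_nonneg z)

lemma integrable_velocity {f : E2 → ℝ} (hf : Integrable f volume) {M : ℝ}
    (hM : ∀ᵐ x : E2, |f x| ≤ M) (x : E2) :
    Integrable (fun y => f y • biotSavart (x - y)) volume := by
  refine Integrable.mono' (g := fun y => M * nearKer (x - y) + |f y|)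
    (((integrable_nearKer.comp_sub_left x).const_mul M).add hf.abs)
    (hf.aestronglyMeasurable.smul (measurable_biotSavart.comp
      (measurable_const.sub measurable_id)).aestronglyMeasurable) ?_
  filter_upwards [hM] with y hy
  rw [norm_smul, Real.norm_eq_abs]
  calc |f y| * ‖biotSavart (x - y)‖ ≤ |f y| * (nearKer (x - y) + 1) := by
        gcongr; exact norm_biotSavart_le _
    _ = |f y| * nearKer (x - y) + |f y| := by ring
    _ ≤ _ := by gcongr; exact nearKer_nonneg _

/-- Absolute convergence before symmetrization. The near part of `K` is integrable, so it is
handled by convolution after bounding one factor `f` by `M`; the far part is bounded. -/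
lemma integrable_oneSided {φ f : E2 → ℝ} (hφ : IsSmoothFn φ) (hc : HasCompactSupport φ)
    (hf : Integrable f volume) {M : ℝ} (hM : ∀ᵐ x : E2, |f x| ≤ M) :
    Integrable (fun q : E2 × E2 =>
      ⟪biotSavart (q.1 - q.2), gradient φ q.1⟫ * (f q.1 * f q.2)) (volume.prod volume) := by
  obtain ⟨C, hC⟩ := exists_gradient_bound hφ hc
  have hC0 : 0 ≤ C := (norm_nonneg _).trans (hC 0)
  have hk : Integrable (fun q : E2 × E2 => |f q.1| * nearKer (q.1 - q.2))
      (volume.prod volume) := by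
    have h1 : Integrable (fun q : E2 × E2 => |f q.2| * nearKer (q.1 - q.2))
        (volume.prod volume) :=
      hf.abs.convolution_integrand (ContinuousLinearMap.mul ℝ ℝ) integrable_nearKer
    refine h1.swap.congr (Eventually.of_forall fun q => ?_)
    simp only [Function.comp, Prod.fst_swap, Prod.snd_swap, nearKer, norm_sub_rev]
  have hff := hf.mul_prod hf
  refine Integrable.mono'
    (g := fun q : E2 × E2 => C * (M * (|f q.1| * nearKer (q.1 - q.2)) + |f q.1| * |f q.2|))
    (((hk.const_mul M).add (hf.abs.mul_prod hf.abs)).const_mul C) ?_ ?_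
  · have hg := (continuous_gradient hφ).measurable
    exact ((measurable_biotSavart.comp (measurable_fst.sub measurable_snd)).inner
      (hg.comp measurable_fst)).aestronglyMeasurable.mul hff.aestronglyMeasurable
  · filter_upwards [Measure.quasiMeasurePreserving_snd.ae hM] with q hq
    rw [norm_mul, Real.norm_eq_abs, Real.norm_eq_abs, abs_mul]
    have h1 : |⟪biotSavart (q.1 - q.2), gradient φ q.1⟫| ≤ (nearKer (q.1 - q.2) + 1) * C :=
      (abs_real_inner_le_norm _ _).trans (mul_le_mul (norm_biotSavart_le _) (hC _)
        (norm_nonneg _) (by linarith [nearKer_nonneg (q.1 - q.2)]))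
    have hn := nearKer_nonneg (q.1 - q.2)
    calc _ ≤ (nearKer (q.1 - q.2) + 1) * C * (|f q.1| * |f q.2|) := by gcongr
      _ = C * (|f q.2| * (|f q.1| * nearKer (q.1 - q.2)) + |f q.1| * |f q.2|) := by ring
      _ ≤ _ := by gcongr

lemma integral_velocity_eq_Bpair {φ f : E2 → ℝ} (hφ : IsSmoothFn φ) (hc : HasCompactSupport φ)
    (hf : Integrable f volume) {M : ℝ} (hM : ∀ᵐ x : E2, |f x| ≤ M) :
    (∫ x, ⟪biotVel f x, gradient φ x⟫ * f x) = Bpair f φ := by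
  let F : E2 × E2 → ℝ := fun q => ⟪biotSavart (q.1 - q.2), gradient φ q.1⟫ * (f q.1 * f q.2)
  have hF : Integrable F (volume.prod volume) := integrable_oneSided hφ hc hf hM
  have h1 : (∫ x, ⟪biotVel f x, gradient φ x⟫ * f x) = ∫ q, F q ∂(volume.prod volume) := by
    rw [integral_prod _ hF]
    congr 1 with x
    rw [real_inner_comm, biotVel, ← integral_inner (integrable_velocity hf hM x),
      ← integral_mul_const]
    congr 1 with y
    simp only [F]
    rw [real_inner_smul_right, real_inner_comm]
    ring
  have h2 : ∫ q : E2 × E2, symKer φ q * (f q.1 * f q.2) ∂(volume.prod volume) =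
      (∫ q, F q ∂(volume.prod volume)) + ∫ q, F q.swap ∂(volume.prod volume) := by
    have hFs : Integrable (fun q => F q.swap) (volume.prod volume) := hF.swap
    rw [← integral_add hF hFs]
    congr 1 with q
    simp only [F, symKer, Prod.fst_swap, Prod.snd_swap]
    -- antisymmetry of `K` turns the second half of the kernel into the swapped first half
    rw [← neg_sub q.1 q.2, biotSavart_neg, inner_neg_left, inner_sub_right]
    ring
  have h3 : Bpair f φ = 1 / 2 *
      ∫ q : E2 × E2, symKer φ q * (f q.1 * f q.2) ∂(volume.prod volume) := rfl
  rw [h3, h2, integral_prod_swap, h1]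
  ring

/-! ### Weakly null sequences in `L¹` -/

/-- A weakly null sequence in `L¹(ν)` is small, uniformly along a tail, on test functions from the
unit ball of `L^∞` that are small in `L¹(μ)`, where `μ` is a finite measure dominating `ν`.
This is the equi-integrability part of the Dunford–Pettis theorem. Baire's theorem is applied to
the unit ball of `L^∞(μ)` with the complete metric of `L¹(μ)`, covered by the closed sets on which
all pairings from some index on are at most `ε / 2`. -/
lemma equi_small {α : Type*} [MeasurableSpace α] {ν μ : Measure α} [IsFiniteMeasure μ]
    (hνμ : ν ≪ μ) {u : ℕ → α → ℝ} (hu : ∀ n, Integrable (u n) ν)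
    (hw : ∀ g : α → ℝ, Measurable g → (∃ M : ℝ, ∀ x, |g x| ≤ M) →
      Tendsto (fun n => ∫ x, u n x * g x ∂ν) atTop (𝓝 0)) {ε : ℝ} (hε : 0 < ε) :
    ∃ r > 0, ∃ N : ℕ, ∀ n ≥ N, ∀ h : α → ℝ, Measurable h → (∀ x, |h x| ≤ 1) →
      ∫ x, |h x| ∂μ < r → |∫ x, u n x * h x ∂ν| ≤ ε := by
  -- the unit ball of `L^∞`, and its subsets on which the tail of `u` pairs to at most `ε / 2`
  let B : Set (Lp ℝ 1 μ) := {g | ∀ᵐ x ∂μ, |g x| ≤ 1}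
  let C : ℕ → Set (Lp ℝ 1 μ) := fun N =>
    {g | (∀ᵐ x ∂μ, |g x| ≤ 1) ∧ ∀ n ≥ N, |∫ x, u n x * g x ∂ν| ≤ ε / 2}
  have hsub : ∀ (g : ℕ → Lp ℝ 1 μ) (l : Lp ℝ 1 μ), (∀ k, ∀ᵐ x ∂μ, |g k x| ≤ 1) →
      Tendsto g atTop (𝓝 l) → ∃ ns : ℕ → ℕ, (∀ᵐ x ∂μ, |l x| ≤ 1) ∧
        ∀ᵐ x ∂μ, Tendsto (fun i => g (ns i) x) atTop (𝓝 (l x)) := by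
    intro g l hg hl
    obtain ⟨ns, -, hns⟩ := (tendstoInMeasure_of_tendsto_Lp hl).exists_seq_tendsto_ae
    refine ⟨ns, ?_, hns⟩
    filter_upwards [hns, ae_all_iff.2 hg] with x hx hgx
    exact le_of_tendsto' hx.abs fun i => hgx (ns i)
  have hB : IsClosed B := by
    refine IsSeqClosed.isClosed fun g l hg hl => ?_
    obtain ⟨_, h1, -⟩ := hsub g l hg hl
    exact h1
  have hC : ∀ N, IsClosed (C N) := by
    intro N
    refine IsSeqClosed.isClosed fun g l hg hl => ?_
    obtain ⟨ns, h1, h2⟩ := hsub g l (fun k => (hg k).1) hl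
    refine ⟨h1, fun n hn => ?_⟩
    have ht : Tendsto (fun i => ∫ x, u n x * g (ns i) x ∂ν) atTop
        (𝓝 (∫ x, u n x * l x ∂ν)) := by
      refine tendsto_integral_of_dominated_convergence (fun x => |u n x|) ?_ (hu n).abs ?_ ?_
      · exact fun i => (hu n).aestronglyMeasurable.mul
          ((Lp.stronglyMeasurable (g (ns i))).aestronglyMeasurable)
      · intro i
        filter_upwards [hνμ.ae_le (hg (ns i)).1] with x hx
        rw [Real.norm_eq_abs, abs_mul]
        exact mul_le_of_le_one_right (abs_nonneg _) hx
      · filter_upwards [hνμ.ae_le h2] with x hx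
        exact hx.const_mul _
    exact le_of_tendsto' ht.abs fun i => (hg (ns i)).2 n hn
  have hcov : ∀ g ∈ B, ∃ N, g ∈ C N := by
    intro g hg
    have hm : Measurable fun x => max (-1) (min 1 (g x)) :=
      measurable_const.max (measurable_const.min (Lp.stronglyMeasurable g).measurable)
    have := hw _ hm ⟨1, fun x => abs_le.2 ⟨le_max_left _ _,
      max_le (by norm_num) (min_le_left _ _)⟩⟩
    obtain ⟨N, hN⟩ := Metric.tendsto_atTop.1 this (ε / 2) (half_pos hε)
    refine ⟨N, hg, fun n hn => ?_⟩
    have h1 := (hN n hn).le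
    rw [Real.dist_eq, sub_zero] at h1
    have he : ∫ x, u n x * g x ∂ν = ∫ x, u n x * max (-1) (min 1 (g x)) ∂ν := by
      refine integral_congr_ae ?_
      filter_upwards [hνμ.ae_le hg] with x hx
      have := abs_le.1 hx
      rw [min_eq_right this.2, max_eq_right this.1]
    rwa [he]
  have : CompleteSpace B := hB.completeSpace_coe
  have : Nonempty B := ⟨⟨0, by
    filter_upwards [Lp.coeFn_zero ℝ 1 μ] with x hx
    rw [hx]
    simp⟩⟩
  obtain ⟨N, g₀, hg₀⟩ := nonempty_interior_of_iUnion_of_closed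
    (f := fun N => ((↑) : B → Lp ℝ 1 μ) ⁻¹' C N)
    (fun N => (hC N).preimage continuous_subtype_val) (by
      refine eq_univ_of_forall fun g => ?_
      obtain ⟨N, hN⟩ := hcov g g.2
      exact mem_iUnion.2 ⟨N, hN⟩)
  obtain ⟨ρ, hρ, hball⟩ := Metric.mem_nhds_iff.1 (mem_interior_iff_mem_nhds.1 hg₀)
  let a : α → ℝ := g₀.1
  have ha : Measurable a := (Lp.stronglyMeasurable g₀.1).measurable
  have ha1 : ∀ᵐ x ∂μ, |a x| ≤ 1 := g₀.2
  have hbd : ∀ b : α → ℝ, Measurable b → (∀ᵐ x ∂μ, |b x| ≤ 1) → Integrable b μ :=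
    fun b hb hb1 => Integrable.of_bound hb.aestronglyMeasurable 1 hb1
  have key : ∀ b : α → ℝ, Measurable b → (∀ᵐ x ∂μ, |b x| ≤ 1) → ∫ x, |b x - a x| ∂μ < ρ →
      ∀ n ≥ N, |∫ x, u n x * b x ∂ν| ≤ ε / 2 := by
    intro b hb hb1 hd n hn
    have hi := hbd b hb hb1
    have hco := hi.coeFn_toL1
    have hmem : hi.toL1 b ∈ B := by
      filter_upwards [hco, hb1] with x hx h1
      rwa [hx]
    have hin : (⟨hi.toL1 b, hmem⟩ : B) ∈ Metric.ball g₀ ρ := by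
      rw [Metric.mem_ball, Subtype.dist_eq, L1.dist_eq_integral_dist]
      refine lt_of_eq_of_lt (integral_congr_ae ?_) hd
      filter_upwards [hco] with x hx
      rw [hx, Real.dist_eq]
    have h2 := (hball hin).2 n hn
    have he : ∫ x, u n x * b x ∂ν = ∫ x, u n x * hi.toL1 b x ∂ν := by
      refine integral_congr_ae ?_
      filter_upwards [hνμ.ae_le hco] with x hx
      rw [hx]
    rwa [he]
  refine ⟨ρ / 2, half_pos hρ, N, fun n hn h hh hh1 hr => ?_⟩
  have hhi : Integrable h μ := hbd h hh (Eventually.of_forall hh1)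
  -- `h` is the difference of two members of the unit ball that are close to `a`
  have hb2m : Measurable fun x => (1 - |h x|) * a x := by fun_prop
  have hb1m : Measurable fun x => (1 - |h x|) * a x + h x := by fun_prop
  have hb2 : ∀ᵐ x ∂μ, |(1 - |h x|) * a x| ≤ 1 - |h x| := by
    filter_upwards [ha1] with x hx
    have h0 := hh1 x
    rw [abs_mul, abs_of_nonneg (by linarith)]
    exact mul_le_of_le_one_right (by linarith) hx
  have hb1 : ∀ᵐ x ∂μ, |(1 - |h x|) * a x + h x| ≤ 1 := by
    filter_upwards [hb2] with x hx
    linarith [abs_add_le ((1 - |h x|) * a x) (h x)]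
  have hb2' : ∀ᵐ x ∂μ, |(1 - |h x|) * a x| ≤ 1 := by
    filter_upwards [hb2] with x hx
    linarith [abs_nonneg (h x)]
  have hint2 : ∫ x, 2 * |h x| ∂μ < ρ := by
    rw [integral_const_mul]; linarith
  have hai := hbd a ha ha1
  have e1 := key _ hb1m hb1 (lt_of_le_of_lt (integral_mono_ae
    ((hbd _ hb1m hb1).sub hai).abs (hhi.abs.const_mul 2) (by
      filter_upwards [ha1] with x hx
      have : (1 - |h x|) * a x + h x - a x = h x - |h x| * a x := by ring
      rw [this]
      refine (abs_sub _ _).trans ?_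
      rw [abs_mul, abs_abs]
      nlinarith [abs_nonneg (h x)])) hint2) n hn
  have e2 := key _ hb2m hb2' (lt_of_le_of_lt (integral_mono_ae
    ((hbd _ hb2m hb2').sub hai).abs (hhi.abs.const_mul 2) (by
      filter_upwards [ha1] with x hx
      have : (1 - |h x|) * a x - a x = - (|h x| * a x) := by ring
      rw [this, abs_neg, abs_mul, abs_abs]
      nlinarith [abs_nonneg (h x)])) hint2) n hn
  have hmul : ∀ b : α → ℝ, Measurable b → (∀ᵐ x ∂μ, |b x| ≤ 1) →
      Integrable (fun x => u n x * b x) ν := fun b hb hb1 =>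
    (hu n).mul_bdd hb.aestronglyMeasurable (hνμ.ae_le hb1)
  have : ∫ x, u n x * h x ∂ν = ∫ x, u n x * ((1 - |h x|) * a x + h x) ∂ν
      - ∫ x, u n x * ((1 - |h x|) * a x) ∂ν := by
    rw [← integral_sub (hmul _ hb1m hb1) (hmul _ hb2m hb2')]
    congr 1 with x
    ring
  rw [this]
  linarith [abs_sub (∫ x, u n x * ((1 - |h x|) * a x + h x) ∂ν)
    (∫ x, u n x * ((1 - |h x|) * a x) ∂ν)]

/-- Weakly null sequences are eventually bounded in `L¹`: small multiples of the signs of `u n` are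
admissible in `equi_small`. -/
lemma l1_bounded {α : Type*} [MeasurableSpace α] {ν : Measure α} [SFinite ν]
    {u : ℕ → α → ℝ} (hu : ∀ n, Integrable (u n) ν)
    (hw : ∀ g : α → ℝ, Measurable g → (∃ M : ℝ, ∀ x, |g x| ≤ M) →
      Tendsto (fun n => ∫ x, u n x * g x ∂ν) atTop (𝓝 0)) :
    ∃ M : ℝ, ∃ N : ℕ, ∀ n ≥ N, ∫ x, |u n x| ∂ν ≤ M := by
  have hac : ν ≪ ν.toFinite := absolutelyContinuous_toFinite ν
  obtain ⟨r, hr, N, hN⟩ := equi_small hac hu hw one_pos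
  let m := ν.toFinite.real univ
  have hm : 0 ≤ m := measureReal_nonneg
  obtain ⟨δ, hδ, hδ1, hδr⟩ : ∃ δ : ℝ, 0 < δ ∧ δ ≤ 1 ∧ δ * m < r := by
    refine ⟨min 1 (r / (m + 1)), by positivity, min_le_left _ _, ?_⟩
    calc min 1 (r / (m + 1)) * m ≤ r / (m + 1) * m := by gcongr; exact min_le_right _ _
      _ < r / (m + 1) * (m + 1) := by gcongr; linarith
      _ = r := by field_simp
  refine ⟨δ⁻¹, N, fun n hn => ?_⟩
  -- test against `δ` times the sign of (a measurable version of) `u n`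
  let w := (hu n).aestronglyMeasurable.mk (u n)
  have hwm : Measurable w := (hu n).aestronglyMeasurable.stronglyMeasurable_mk.measurable
  have hwe : u n =ᵐ[ν] w := (hu n).aestronglyMeasurable.ae_eq_mk
  have hs : MeasurableSet {x | 0 ≤ w x} := measurableSet_le measurable_const hwm
  have hsm : Measurable fun x => if 0 ≤ w x then δ else -δ :=
    Measurable.ite hs measurable_const measurable_const
  have habs : ∀ x, |if 0 ≤ w x then δ else -δ| = δ := by
    intro x; split_ifs <;> simp [abs_of_pos hδ]
  have h1 := hN n hn _ hsm (fun x => (habs x).le.trans hδ1) (by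
    simp only [habs, integral_const, smul_eq_mul]
    rwa [mul_comm])
  have h2 : ∫ x, u n x * (if 0 ≤ w x then δ else -δ) ∂ν = δ * ∫ x, |u n x| ∂ν := by
    rw [← integral_const_mul]
    refine integral_congr_ae ?_
    filter_upwards [hwe] with x hx
    rw [hx]
    split_ifs with h
    · rw [abs_of_nonneg h, mul_comm]
    · rw [abs_of_neg (not_le.1 h)]; ring
  rw [h2] at h1
  rw [← one_div, le_div_iff₀ hδ, mul_comm]
  exact (le_abs_self _).trans h1

/-- A weakly null sequence in `L¹` pairs to zero with a bounded sequence of functions converging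
pointwise to zero: by dominated convergence the latter is null in `L¹` of a finite measure, so
`equi_small` applies. -/
lemma pair_tendsto_zero {α : Type*} [MeasurableSpace α] {ν : Measure α} [SFinite ν]
    {u : ℕ → α → ℝ} (hu : ∀ n, Integrable (u n) ν)
    (hw : ∀ g : α → ℝ, Measurable g → (∃ M : ℝ, ∀ x, |g x| ≤ M) →
      Tendsto (fun n => ∫ x, u n x * g x ∂ν) atTop (𝓝 0))
    {h : ℕ → α → ℝ} (hm : ∀ n, Measurable (h n)) {N₀ : ℕ} {M : ℝ}
    (hM : ∀ n ≥ N₀, ∀ x, |h n x| ≤ M) (hlim : ∀ x, Tendsto (fun n => h n x) atTop (𝓝 0)) :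
    Tendsto (fun n => ∫ x, u n x * h n x ∂ν) atTop (𝓝 0) := by
  have hac : ν ≪ ν.toFinite := absolutelyContinuous_toFinite ν
  let M' := max M 1
  have hM' : 0 < M' := lt_max_of_lt_right one_pos
  -- rescaling puts the test functions into the unit ball
  have hk1 : ∀ n ≥ N₀, ∀ x, |M'⁻¹ * h n x| ≤ 1 := by
    intro n hn x
    rw [abs_mul, abs_of_pos (inv_pos.2 hM'), inv_mul_le_iff₀ hM', mul_one]
    exact (hM n hn x).trans (le_max_left _ _)
  have hI : Tendsto (fun n => ∫ x, |M'⁻¹ * h (n + N₀) x| ∂ν.toFinite) atTop (𝓝 0) := by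
    have := tendsto_integral_of_dominated_convergence (μ := ν.toFinite)
      (F := fun n x => |M'⁻¹ * h (n + N₀) x|) (f := fun _ => 0) (fun _ => (1 : ℝ))
      (fun n => (((hm (n + N₀)).const_mul _).abs).aestronglyMeasurable) (integrable_const _)
      (fun n => Eventually.of_forall fun x => by
        rw [Real.norm_eq_abs, abs_abs]; exact hk1 _ (Nat.le_add_left _ _) x)
      (Eventually.of_forall fun x => by
        have := (((hlim x).comp (tendsto_add_atTop_nat N₀)).const_mul M'⁻¹).abs
        simpa using this)
    simpa using this
  have hI' : Tendsto (fun n => ∫ x, |M'⁻¹ * h n x| ∂ν.toFinite) atTop (𝓝 0) :=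
    (tendsto_add_atTop_iff_nat N₀).1 hI
  have : Tendsto (fun n => ∫ x, u n x * (M'⁻¹ * h n x) ∂ν) atTop (𝓝 0) := by
    rw [Metric.tendsto_nhds]
    intro ε hε
    obtain ⟨r, hr, N, hN⟩ := equi_small hac hu hw (half_pos hε)
    filter_upwards [hI'.eventually_lt_const hr, eventually_ge_atTop N, eventually_ge_atTop N₀]
      with n h1 h2 h3
    rw [Real.dist_eq, sub_zero]
    exact (hN n h2 _ ((hm n).const_mul _) (hk1 n h3) h1).trans_lt (half_lt_self hε)
  have h2 := this.const_mul M'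
  rw [mul_zero] at h2
  refine h2.congr fun n => ?_
  rw [← integral_const_mul]
  congr 1 with x
  field_simp

/-! ### Weak continuity of the pairing -/

/-- With `T g (x) = ∫ H(x,y) g(y) dy` and `u n = fs n - f`, the bilinear expansion of
`∫ fs n · T (fs n)` around `∫ f · T f` has three error terms: `∫ u n · T (u n)`, `∫ u n · T f`
and `∫ f · T (u n)`. -/
lemma Bpair_tendsto {φ : E2 → ℝ} (hφ : IsSmoothFn φ) (hc : HasCompactSupport φ)
    {fs : ℕ → E2 → ℝ} {f : E2 → ℝ} (hfs : ∀ n, Integrable (fs n) volume)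
    (hf : Integrable f volume)
    (hw : ∀ g : E2 → ℝ, Measurable g → (∃ M : ℝ, ∀ x, |g x| ≤ M) →
        Tendsto (fun n => ∫ x, fs n x * g x) atTop (𝓝 (∫ x, f x * g x))) :
    Tendsto (fun n => Bpair (fs n) φ) atTop (𝓝 (Bpair f φ)) := by
  let L := (2 * π)⁻¹ * (⨆ x : E2, ‖iteratedFDeriv ℝ 2 φ x‖)
  have hH := abs_symKer_le hφ hc
  have hHm := measurable_symKer hφ
  have hL : 0 ≤ L := (abs_nonneg _).trans (hH (0, 0))
  let T : (E2 → ℝ) → E2 → ℝ := fun g x => ∫ y, g y * symKer φ (x, y)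
  have hmul : ∀ (g : E2 → ℝ) (k : E2 → ℝ) (M : ℝ), Integrable g volume → Measurable k →
      (∀ x, |k x| ≤ M) → Integrable (fun x => g x * k x) volume := fun g k M hg hk hM =>
    hg.mul_bdd hk.aestronglyMeasurable (Eventually.of_forall hM)
  -- `g` is only a.e. strongly measurable; replacing it by a measurable version does not change `T g`
  have hTm : ∀ g, Integrable g volume → Measurable (T g) := by
    intro g hg
    have h1 : T g = fun x => ∫ y, hg.aestronglyMeasurable.mk g y * symKer φ (x, y) := by
      ext x
      refine integral_congr_ae ?_
      filter_upwards [hg.aestronglyMeasurable.ae_eq_mk] with y hy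
      rw [← hy]
    rw [h1]
    refine (StronglyMeasurable.integral_prod_right' (ν := (volume : Measure E2))
      (f := fun q : E2 × E2 => hg.aestronglyMeasurable.mk g q.2 * symKer φ q) ?_).measurable
    exact ((hg.aestronglyMeasurable.stronglyMeasurable_mk.measurable.comp
      measurable_snd).mul hHm).stronglyMeasurable
  have hTb : ∀ g, Integrable g volume → ∀ x, |T g x| ≤ (∫ y, |g y|) * L := by
    intro g hg x
    rw [← integral_mul_const]
    refine norm_integral_le_of_norm_le (f := fun y => g y * symKer φ (x, y))
      (hg.abs.mul_const _) (Eventually.of_forall fun y => ?_)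
    rw [norm_mul, Real.norm_eq_abs, Real.norm_eq_abs]
    gcongr
    exact hH _
  have hB : ∀ g, Integrable g volume → Bpair g φ = 1 / 2 * ∫ x, g x * T g x := by
    intro g hg
    have h3 : Bpair g φ = 1 / 2 *
        ∫ q : E2 × E2, symKer φ q * (g q.1 * g q.2) ∂(volume.prod volume) := rfl
    rw [h3, integral_prod _ (integrable_symKer_mul hφ hc hg hg)]
    congr 2 with x
    rw [← integral_const_mul]
    congr 1 with y
    ring
  let u : ℕ → E2 → ℝ := fun n x => fs n x - f x
  have hu : ∀ n, Integrable (u n) volume := fun n => (hfs n).sub hf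
  have hwu : ∀ g : E2 → ℝ, Measurable g → (∃ M : ℝ, ∀ x, |g x| ≤ M) →
      Tendsto (fun n => ∫ x, u n x * g x) atTop (𝓝 0) := by
    rintro g hg ⟨M, hM⟩
    have h1 := (hw g hg ⟨M, hM⟩).sub_const (∫ x, f x * g x)
    rw [sub_self] at h1
    refine h1.congr fun n => ?_
    rw [← integral_sub (hmul _ _ M (hfs n) hg hM) (hmul _ _ M hf hg hM)]
    congr 1 with x
    ring
  have hsec : ∀ x, Measurable fun y => symKer φ (x, y) := fun x =>
    hHm.comp (measurable_const.prodMk measurable_id)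
  -- each slice `H(x, ·)` is a bounded measurable test function
  have hTu : ∀ x, Tendsto (fun n => T (u n) x) atTop (𝓝 0) := fun x =>
    hwu _ (hsec x) ⟨L, fun y => hH _⟩
  obtain ⟨M, N, hMN⟩ := l1_bounded hu hwu
  have hTuB : ∀ n ≥ N, ∀ x, |T (u n) x| ≤ M * L := fun n hn x =>
    (hTb _ (hu n) x).trans (mul_le_mul_of_nonneg_right (hMN n hn) hL)
  have hA : Tendsto (fun n => ∫ x, u n x * T (u n) x) atTop (𝓝 0) :=
    pair_tendsto_zero hu hwu (fun n => hTm _ (hu n)) hTuB hTu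
  have hB1 : Tendsto (fun n => ∫ x, u n x * T f x) atTop (𝓝 0) :=
    hwu _ (hTm f hf) ⟨_, hTb f hf⟩
  -- dominated by a multiple of `|f|` from the index `N` on
  have hC : Tendsto (fun n => ∫ x, f x * T (u n) x) atTop (𝓝 0) := by
    refine (tendsto_add_atTop_iff_nat N).1 ?_
    have := tendsto_integral_of_dominated_convergence (μ := (volume : Measure E2))
      (F := fun n x => f x * T (u (n + N)) x) (f := fun _ => 0) (fun x => |f x| * (M * L))
      (fun n => hf.aestronglyMeasurable.mul (hTm _ (hu _)).aestronglyMeasurable)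
      (hf.abs.mul_const _)
      (fun n => Eventually.of_forall fun x => by
        rw [norm_mul, Real.norm_eq_abs, Real.norm_eq_abs]
        exact mul_le_mul_of_nonneg_left (hTuB _ (Nat.le_add_left _ _) x) (abs_nonneg _))
      (Eventually.of_forall fun x => by
        simpa using ((hTu x).comp (tendsto_add_atTop_nat N)).const_mul (f x))
    simpa using this
  have hsum := ((((hA.add hB1).add hC).add_const (∫ x, f x * T f x))).const_mul (1 / 2 : ℝ)
  rw [hB f hf]
  simp only [add_zero, zero_add] at hsum
  refine hsum.congr fun n => ?_
  rw [hB _ (hfs n)]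
  have hTadd : ∀ x, T (fs n) x = T (u n) x + T f x := by
    intro x
    simp only [T]
    rw [← integral_add (hmul _ _ L (hu n) (hsec x) fun y => hH _)
      (hmul _ _ L hf (hsec x) fun y => hH _)]
    congr 1 with y
    simp only [u]
    ring
  have i1 := hmul _ _ _ (hu n) (hTm _ (hu n)) (hTb _ (hu n))
  have i2 := hmul _ _ _ (hu n) (hTm f hf) (hTb f hf)
  have i3 := hmul _ _ _ hf (hTm _ (hu n)) (hTb _ (hu n))
  have i4 := hmul _ _ _ hf (hTm f hf) (hTb f hf)
  have i12 : Integrable (fun x => u n x * T (u n) x + u n x * T f x) volume := i1.add i2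
  have i123 : Integrable (fun x => u n x * T (u n) x + u n x * T f x + f x * T (u n) x) volume :=
    i12.add i3
  rw [← integral_add i1 i2, ← integral_add i12 i3, ← integral_add i123 i4]
  congr 2 with x
  rw [hTadd]
  simp only [u]
  ring

/-- Lemma 6.11: the symmetrized Biot–Savart pairing: absolute
convergence and bound, representation of `−∇·((K∗f)f)`, and weak-`L¹` continuity. -/
theorem stmt10 :
    -- (i) absolute convergence and the bound `|B(f,φ)| ≤ (4π)⁻¹ ‖D²φ‖_∞ ‖f‖₁²`
    (∀ f φ : E2 → ℝ, Integrable f volume → IsSmoothFn φ → HasCompactSupport φ →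
      Integrable (fun q : E2 × E2 =>
        ⟪biotSavart (q.1 - q.2), gradient φ q.1 - gradient φ q.2⟫ * (f q.1 * f q.2))
        volume ∧
      |Bpair f φ| ≤ (4 * π)⁻¹ * (⨆ x : E2, ‖iteratedFDeriv ℝ 2 φ x‖) * (∫ x, |f x|) ^ 2) ∧
    -- (ii) for `f ∈ L¹ ∩ L^∞`, `B(f,φ)` represents `∫ (K∗f)·∇φ f`
    (∀ f φ : E2 → ℝ, Integrable f volume → (∃ M : ℝ, ∀ᵐ x : E2, |f x| ≤ M) →
      IsSmoothFn φ → HasCompactSupport φ →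
      (∫ x, ⟪biotVel f x, gradient φ x⟫ * f x) = Bpair f φ) ∧
    -- (iii) continuity along weak `L¹` convergence
    (∀ (fs : ℕ → E2 → ℝ) (f : E2 → ℝ), (∀ n, Integrable (fs n) volume) →
      Integrable f volume →
      (∀ g : E2 → ℝ, Measurable g → (∃ M : ℝ, ∀ x, |g x| ≤ M) →
        Tendsto (fun n => ∫ x, fs n x * g x) atTop (𝓝 (∫ x, f x * g x))) →
      ∀ φ : E2 → ℝ, IsSmoothFn φ → HasCompactSupport φ →
        Tendsto (fun n => Bpair (fs n) φ) atTop (𝓝 (Bpair f φ))) := by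
  refine ⟨fun f φ hf hφ hc => ⟨integrable_symKer_mul hφ hc hf hf, abs_Bpair_le hφ hc hf⟩, ?_, ?_⟩
  · rintro f φ hf ⟨M, hM⟩ hφ hc
    exact integral_velocity_eq_Bpair hφ hc hf hM
  · intro fs f hfs hf hw φ hφ hc
    exact Bpair_tendsto hφ hc hfs hf hw
end
end

section
/- Let h be an Osgood modulus of continuity and T ∈ (0,∞]. Let f, g : [0,T) → [0,∞) be nonnegative functions, integrable on compact subintervals, and let K ≥ 0 be a constant with f_t ≤ K + ∫_0^t g_s h(f_s) ds for all t ∈ [0,T). Then f_t ≤ M^h(K, ∫_0^t g_s ds) for all t ∈ [0,T); in particular, if K = 0 then f ≡ 0 on [0,T). -/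
/-!
Write `F s = K + ∫₀ˢ g h(f)` for `K > 0`. Since `f ≤ F` and `h` is increasing, for `x < z` with
`z` close to `x` one has
`G(F z) - G(F x) ≤ (F z - F x) / h(F x) ≤ (h(F z) / h(F x)) ∫ₓᶻ g ≤ (1 + ε) ∫ₓᶻ g`,
by continuity of `h ∘ F`. Continuous induction along `[0, t]` gives
`G(F t) ≤ G(K) + (1 + ε) ∫₀ᵗ g`, and `ε → 0` gives `osgoodG_primitive_le`. This argument replaces
differentiation of the absolutely continuous function `G ∘ F`.

For `K > 0` it says that `F t` lies in the set whose supremum is `M^h(K, ∫₀ᵗ g)`. That set is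
bounded because subadditivity makes `h` grow at most linearly, so that `G → ∞` (`bddAbove_osgoodG`).
For `K = 0` the inequality holds with every `ε > 0` in the place of `K`; if `c = ∫₀ᵗ g h(f)` were
positive, then `∫_ε^c dr / h(r) ≤ ∫₀ᵗ g` for all small `ε`, contradicting the Osgood condition.
-/

open Real MeasureTheory Set Filter Topology
open scoped BigOperators ENNReal

noncomputable section

/-- An Osgood modulus of continuity: continuous, strictly increasing, subadditive,
vanishing at `0`, with divergent integral `∫₀^ε dr / h(r) = +∞`. -/
def OsgoodModulus (h : ℝ → ℝ) : Prop :=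
  ContinuousOn h (Ici 0) ∧ StrictMonoOn h (Ici 0) ∧ h 0 = 0 ∧
  (∀ a b : ℝ, 0 ≤ a → 0 ≤ b → h (a + b) ≤ h a + h b) ∧
  ∀ ε : ℝ, 0 < ε → (∫⁻ r in Ioo (0 : ℝ) ε, ENNReal.ofReal (h r)⁻¹) = ⊤

/-- `G(r) = ∫_{1}^{r} dr̃ / h(r̃)` (base point `r₀ = 1`; `M^h` below is independent of
this choice). -/
def osgoodG (h : ℝ → ℝ) (r : ℝ) : ℝ := ∫ x in (1 : ℝ)..r, (h x)⁻¹

/-- `M^h(α,β) = G⁻¹(G(α) + β)`, with `M^h(0,β) = 0`. -/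
def osgoodM (h : ℝ → ℝ) (α β : ℝ) : ℝ :=
  if α ≤ 0 then 0 else sSup {r : ℝ | 0 < r ∧ osgoodG h r ≤ osgoodG h α + β}

lemma OsgoodModulus.pos {h : ℝ → ℝ} (hh : OsgoodModulus h) {x : ℝ} (hx : 0 < x) : 0 < h x := by
  have := hh.2.1 (mem_Ici.2 le_rfl) (mem_Ici.2 hx.le) hx
  rwa [hh.2.2.1] at this

lemma OsgoodModulus.nonneg {h : ℝ → ℝ} (hh : OsgoodModulus h) {x : ℝ} (hx : 0 ≤ x) :
    0 ≤ h x := by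
  rcases hx.eq_or_lt with rfl | hx
  · exact hh.2.2.1.ge
  · exact (hh.pos hx).le

lemma OsgoodModulus.continuousOn_inv {h : ℝ → ℝ} (hh : OsgoodModulus h) :
    ContinuousOn (fun x => (h x)⁻¹) (Ioi 0) :=
  (hh.1.mono Ioi_subset_Ici_self).inv₀ fun _ hx => (hh.pos hx).ne'

lemma OsgoodModulus.intervalIntegrable_inv {h : ℝ → ℝ} (hh : OsgoodModulus h) {a b : ℝ}
    (ha : 0 < a) (hb : 0 < b) : IntervalIntegrable (fun x => (h x)⁻¹) volume a b := by
  apply (hh.continuousOn_inv.mono _).intervalIntegrable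
  intro x hx
  exact (lt_min ha hb).trans_le hx.1

lemma osgoodG_sub {h : ℝ → ℝ} (hh : OsgoodModulus h) {a b : ℝ} (ha : 0 < a) (hb : 0 < b) :
    osgoodG h b - osgoodG h a = ∫ x in a..b, (h x)⁻¹ := by
  unfold osgoodG
  exact intervalIntegral.integral_interval_sub_left
    (hh.intervalIntegrable_inv one_pos hb) (hh.intervalIntegrable_inv one_pos ha)

lemma continuousOn_osgoodG {h : ℝ → ℝ} (hh : OsgoodModulus h) :
    ContinuousOn (osgoodG h) (Ioi 0) := by
  intro x hx
  have := intervalIntegral.integral_hasDerivAt_right (hh.intervalIntegrable_inv one_pos hx)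
    (hh.continuousOn_inv.stronglyMeasurableAtFilter isOpen_Ioi x hx)
    (hh.continuousOn_inv.continuousAt (isOpen_Ioi.mem_nhds hx))
  exact this.continuousAt.continuousWithinAt

lemma osgoodG_sub_le {h : ℝ → ℝ} (hh : OsgoodModulus h) {a b : ℝ} (ha : 0 < a) (hab : a ≤ b) :
    osgoodG h b - osgoodG h a ≤ (b - a) * (h a)⁻¹ := by
  have hb := ha.trans_le hab
  rw [osgoodG_sub hh ha hb]
  have := intervalIntegral.integral_mono_on (μ := volume) (g := fun _ => (h a)⁻¹) hab
    (hh.intervalIntegrable_inv ha hb) intervalIntegrable_const (fun x hx => by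
      exact inv_anti₀ (hh.pos ha)
        (hh.2.1.monotoneOn (mem_Ici.2 ha.le) (mem_Ici.2 (ha.le.trans hx.1)) hx.1))
  simpa using this

lemma osgoodG_mono {h : ℝ → ℝ} (hh : OsgoodModulus h) {a b : ℝ} (ha : 0 < a) (hab : a ≤ b) :
    osgoodG h a ≤ osgoodG h b := by
  rw [← sub_nonneg, osgoodG_sub hh ha (ha.trans_le hab)]
  exact intervalIntegral.integral_nonneg hab fun x hx =>
    inv_nonneg.2 (hh.pos (ha.trans_le hx.1)).le

lemma OsgoodModulus.le_linear {h : ℝ → ℝ} (hh : OsgoodModulus h) {x : ℝ} (hx : 1 ≤ x) :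
    h x ≤ 2 * h 1 * x := by
  have hnat : ∀ n : ℕ, h n ≤ n * h 1 := by
    intro n
    induction n with
    | zero => simp [hh.2.2.1]
    | succ k ih =>
      have := hh.2.2.2.1 k 1 (by positivity) zero_le_one
      push_cast
      linarith
  have h1 : h x ≤ h ⌈x⌉₊ :=
    hh.2.1.monotoneOn (mem_Ici.2 (by linarith)) (mem_Ici.2 (by positivity)) (Nat.le_ceil x)
  have h2 := (Nat.ceil_lt_add_one (by linarith : (0:ℝ) ≤ x)).le
  have h3 := hh.pos one_pos
  have h4 := hnat ⌈x⌉₊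
  nlinarith

/-- `G` tends to `∞` at `∞`: the linear growth of `h` gives `G(r) ≥ log r / (2 h(1))` for
`r ≥ 1`. Hence the sublevel sets of `G` are bounded above. -/
lemma bddAbove_osgoodG {h : ℝ → ℝ} (hh : OsgoodModulus h) (C : ℝ) :
    BddAbove {r : ℝ | 0 < r ∧ osgoodG h r ≤ C} := by
  have h1 := hh.pos one_pos
  refine ⟨max 1 (Real.exp (2 * h 1 * C)), ?_⟩
  rintro r ⟨hr, hG⟩
  rcases le_total r 1 with hr1 | hr1
  · exact le_max_of_le_left hr1
  apply le_max_of_le_right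
  rw [← Real.log_le_iff_le_exp hr]
  have hlog : (2 * h 1)⁻¹ * Real.log r ≤ osgoodG h r := by
    have e : ∫ x in (1:ℝ)..r, (2 * h 1)⁻¹ * x⁻¹ = (2 * h 1)⁻¹ * Real.log r := by
      rw [intervalIntegral.integral_const_mul, integral_inv_of_pos one_pos hr, div_one]
    rw [← e]
    apply intervalIntegral.integral_mono_on hr1
    · apply IntervalIntegrable.const_mul
      apply intervalIntegral.intervalIntegrable_inv
      · intro x hx
        rw [uIcc_of_le hr1] at hx
        linarith [hx.1]
      · exact continuousOn_id
    · exact hh.intervalIntegrable_inv one_pos hr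
    · intro x hx
      rw [← mul_inv]
      exact inv_anti₀ (hh.pos (by linarith [hx.1])) (hh.le_linear hx.1)
  have h2 := hlog.trans hG
  rwa [inv_mul_le_iff₀ (by positivity)] at h2

/-- The inequality `G(F(t)) ≤ G(K) + ∫₀ᵗ g` for `F(s) = K + ∫₀ˢ g h(f)` and `K > 0`. -/
lemma osgoodG_primitive_le {h : ℝ → ℝ} (hh : OsgoodModulus h) {f g : ℝ → ℝ} {t K : ℝ}
    (ht : 0 ≤ t) (hK : 0 < K)
    (hf0 : ∀ s ∈ Icc 0 t, 0 ≤ f s) (hg0 : ∀ s ∈ Icc 0 t, 0 ≤ g s)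
    (hg : IntegrableOn g (Icc 0 t)) (hgf : IntegrableOn (fun s => g s * h (f s)) (Icc 0 t))
    (hineq : ∀ s ∈ Icc 0 t, f s ≤ K + ∫ r in (0 : ℝ)..s, g r * h (f r)) :
    osgoodG h (K + ∫ r in (0 : ℝ)..t, g r * h (f r)) ≤
      osgoodG h K + ∫ r in (0 : ℝ)..t, g r := by
  set F : ℝ → ℝ := fun s => K + ∫ r in (0 : ℝ)..s, g r * h (f r) with hF
  have hii : ∀ {φ : ℝ → ℝ}, IntegrableOn φ (Icc 0 t) → ∀ {a b : ℝ}, a ∈ Icc 0 t → b ∈ Icc 0 t →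
      IntervalIntegrable φ volume a b := by
    intro φ hφ a b ha hb
    apply IntegrableOn.intervalIntegrable
    exact hφ.mono_set (uIcc_subset_Icc ha hb)
  have h0 : (0 : ℝ) ∈ Icc 0 t := ⟨le_rfl, ht⟩
  have hcont : ∀ {φ : ℝ → ℝ}, IntegrableOn φ (Icc 0 t) →
      ContinuousOn (fun s => ∫ r in (0 : ℝ)..s, φ r) (Icc 0 t) := by
    intro φ hφ
    have := intervalIntegral.continuousOn_primitive_interval (μ := volume) (f := φ) (a := 0) (b := t)
      (by rwa [uIcc_of_le ht])
    rwa [uIcc_of_le ht] at this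
  have hFc : ContinuousOn F (Icc 0 t) := continuousOn_const.add (hcont hgf)
  have hFsub : ∀ x ∈ Icc 0 t, ∀ z ∈ Icc 0 t, F z - F x = ∫ r in x..z, g r * h (f r) := by
    intro x hx z hz
    rw [hF]
    simp only [add_sub_add_left_eq_sub]
    exact intervalIntegral.integral_interval_sub_left (hii hgf h0 hz) (hii hgf h0 hx)
  have hFmono : ∀ x ∈ Icc 0 t, ∀ z ∈ Icc 0 t, x ≤ z → F x ≤ F z := by
    intro x hx z hz hxz
    rw [← sub_nonneg, hFsub x hx z hz]
    refine intervalIntegral.integral_nonneg hxz fun r hr => ?_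
    have hr' : r ∈ Icc 0 t := ⟨hx.1.trans hr.1, hr.2.trans hz.2⟩
    exact mul_nonneg (hg0 r hr') (hh.nonneg (hf0 r hr'))
  have hF0 : F 0 = K := by simp [hF]
  have hFpos : ∀ x ∈ Icc 0 t, 0 < F x := by
    intro x hx
    have := hFmono 0 h0 x hx hx.1
    linarith
  have key : ∀ ε : ℝ, 0 < ε →
      osgoodG h (F t) ≤ osgoodG h K + (1 + ε) * ∫ r in (0 : ℝ)..t, g r := by
    intro ε hε
    set S : Set ℝ := {s ∈ Icc 0 t | osgoodG h (F s) ≤ osgoodG h K + (1 + ε) * ∫ r in (0 : ℝ)..s, g r}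
      with hS
    have hSc : IsClosed S := isClosed_Icc.isClosed_le
      ((continuousOn_osgoodG hh).comp hFc fun x hx => hFpos x hx)
      (continuousOn_const.add (continuousOn_const.mul (hcont hg)))
    suffices Icc 0 t ⊆ S from (this ⟨ht, le_rfl⟩).2
    apply (hSc.inter isClosed_Icc).Icc_subset_of_forall_exists_gt
    · exact ⟨h0, by simp [hF0]⟩
    rintro x ⟨⟨hx, hxS⟩, -, hxt⟩ y hy
    have hhF : ContinuousOn (fun z => h (F z)) (Icc 0 t) :=
      hh.1.comp hFc fun z hz => (hFpos z hz).le
    have hev : ∀ᶠ z in 𝓝[>] x, h (F z) < (1 + ε) * h (F x) := by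
      have hc : Tendsto (fun z => h (F z)) (𝓝[>] x) (𝓝 (h (F x))) := by
        have := (hhF x hx).mono (Ioo_subset_Icc_self.trans (Icc_subset_Icc_left hx.1) : Ioo x t ⊆ _)
        rwa [ContinuousWithinAt, nhdsWithin_Ioo_eq_nhdsGT hxt] at this
      apply hc.eventually_lt_const
      nlinarith [hh.pos (hFpos x hx)]
    obtain ⟨z, hz1, hz2⟩ := (hev.and (Ioc_mem_nhdsGT (lt_min hy hxt))).exists
    have hxz : x ≤ z := hz2.1.le
    have hz : z ∈ Icc 0 t := ⟨hx.1.trans hxz, hz2.2.trans (min_le_right _ _)⟩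
    refine ⟨z, ⟨hz, ?_⟩, hz2.1, hz2.2.trans (min_le_left _ _)⟩
    have hpx := hh.pos (hFpos x hx)
    have e1 : F z - F x ≤ (∫ r in x..z, g r) * h (F z) := by
      rw [hFsub x hx z hz, ← intervalIntegral.integral_mul_const]
      apply intervalIntegral.integral_mono_on hxz (hii hgf hx hz) ((hii hg hx hz).mul_const _)
      intro r hr
      have hr' : r ∈ Icc 0 t := ⟨hx.1.trans hr.1, hr.2.trans hz.2⟩
      exact mul_le_mul_of_nonneg_left (hh.2.1.monotoneOn (hf0 r hr') (hFpos z hz).le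
        ((hineq r hr').trans (hFmono r hr' z hz hr.2))) (hg0 r hr')
    have e2 : 0 ≤ ∫ r in x..z, g r :=
      intervalIntegral.integral_nonneg hxz fun r hr => hg0 r ⟨hx.1.trans hr.1, hr.2.trans hz.2⟩
    have e3 := osgoodG_sub_le hh (hFpos x hx) (hFmono x hx z hz hxz)
    have e4 : (F z - F x) * (h (F x))⁻¹ ≤ (1 + ε) * ∫ r in x..z, g r := by
      rw [← div_eq_mul_inv, div_le_iff₀ hpx]
      nlinarith [mul_le_mul_of_nonneg_left hz1.le e2]
    have e5 := intervalIntegral.integral_add_adjacent_intervals (hii hg h0 hx) (hii hg hx hz)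
    rw [← e5, mul_add]
    linarith
  have hlim : Tendsto (fun ε : ℝ => osgoodG h K + (1 + ε) * ∫ r in (0 : ℝ)..t, g r) (𝓝[>] 0)
      (𝓝 (osgoodG h K + (1 + 0) * ∫ r in (0 : ℝ)..t, g r)) :=
    tendsto_nhdsWithin_of_tendsto_nhds (Continuous.tendsto (by fun_prop) 0)
  have := ge_of_tendsto hlim (by filter_upwards [self_mem_nhdsWithin] with ε hε using key ε hε)
  simpa using this

/-- The Osgood condition in terms of `G`: `G(ε) → -∞` as `ε → 0`. -/
lemma OsgoodModulus.exists_osgoodG_lt {h : ℝ → ℝ} (hh : OsgoodModulus h) (C : ℝ) :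
    ∃ ε : ℝ, 0 < ε ∧ osgoodG h ε < C := by
  by_contra! hcon
  have hint : IntegrableOn (fun x => (h x)⁻¹) (Ioc 0 1) := by
    have hu : Tendsto (fun n : ℕ => 1 / ((n : ℝ) + 1)) atTop (𝓝 0) :=
      tendsto_one_div_add_atTop_nhds_zero_nat
    refine integrableOn_Ioc_of_intervalIntegral_norm_bounded_left (I := -C) (l := atTop)
      (fun n => ?_) hu (Eventually.of_forall fun n => ?_)
    · have hp : (0 : ℝ) < 1 / ((n : ℝ) + 1) := by positivity
      exact (hh.intervalIntegrable_inv hp one_pos).1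
    · have hp : (0 : ℝ) < 1 / ((n : ℝ) + 1) := by positivity
      have hp1 : 1 / ((n : ℝ) + 1) ≤ 1 := by
        rw [div_le_one (by positivity)]
        linarith [(Nat.cast_nonneg n : (0 : ℝ) ≤ n)]
      have e : ∫ x in Ioc (1 / ((n : ℝ) + 1)) 1, ‖(h x)⁻¹‖ =
          ∫ x in (1 / ((n : ℝ) + 1))..1, (h x)⁻¹ := by
        rw [intervalIntegral.integral_of_le hp1]
        refine setIntegral_congr_fun measurableSet_Ioc fun x hx => ?_
        exact Real.norm_of_nonneg (inv_nonneg.2 (hh.pos (hp.trans hx.1)).le)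
      rw [e, ← osgoodG_sub hh hp one_pos]
      have := hcon _ hp
      have h1 : osgoodG h 1 = 0 := by simp [osgoodG]
      linarith
  have hfin := (hint.mono_set Ioo_subset_Ioc_self).lintegral_lt_top
  exact hfin.ne (hh.2.2.2.2 1 one_pos)

/-- Lemma 2.12, Bihari–Osgood inequality. -/
theorem stmt14 (h : ℝ → ℝ) (hh : OsgoodModulus h) (T : ℝ≥0∞) (hT : 0 < T)
    (f g : ℝ → ℝ)
    (hf0 : ∀ t : ℝ, 0 ≤ t → ENNReal.ofReal t < T → 0 ≤ f t)
    (hg0 : ∀ t : ℝ, 0 ≤ t → ENNReal.ofReal t < T → 0 ≤ g t)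
    (hint : ∀ t : ℝ, 0 ≤ t → ENNReal.ofReal t < T →
      IntegrableOn f (Icc 0 t) volume ∧ IntegrableOn g (Icc 0 t) volume ∧
      IntegrableOn (fun s => g s * h (f s)) (Icc 0 t) volume)
    (K : ℝ) (hK : 0 ≤ K)
    (hineq : ∀ t : ℝ, 0 ≤ t → ENNReal.ofReal t < T →
      f t ≤ K + ∫ s in (0 : ℝ)..t, g s * h (f s)) :
    (∀ t : ℝ, 0 ≤ t → ENNReal.ofReal t < T →
      f t ≤ osgoodM h K (∫ s in (0 : ℝ)..t, g s)) ∧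
    (K = 0 → ∀ t : ℝ, 0 ≤ t → ENNReal.ofReal t < T → f t = 0) := by
  have hsub : ∀ {t s : ℝ}, ENNReal.ofReal t < T → s ∈ Icc 0 t → ENNReal.ofReal s < T :=
    fun htT hs => (ENNReal.ofReal_le_ofReal hs.2).trans_lt htT
  have core : ∀ L : ℝ, K ≤ L → 0 < L → ∀ t : ℝ, 0 ≤ t → ENNReal.ofReal t < T →
      osgoodG h (L + ∫ r in (0 : ℝ)..t, g r * h (f r)) ≤
        osgoodG h L + ∫ r in (0 : ℝ)..t, g r := by
    intro L hKL hL t ht htT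
    obtain ⟨-, hg, hgf⟩ := hint t ht htT
    exact osgoodG_primitive_le hh ht hL (fun s hs => hf0 s hs.1 (hsub htT hs))
      (fun s hs => hg0 s hs.1 (hsub htT hs)) hg hgf
      (fun s hs => (hineq s hs.1 (hsub htT hs)).trans (by linarith))
  have hI : ∀ t : ℝ, 0 ≤ t → ENNReal.ofReal t < T → 0 ≤ ∫ r in (0 : ℝ)..t, g r * h (f r) := by
    intro t ht htT
    refine intervalIntegral.integral_nonneg ht fun r hr => ?_
    exact mul_nonneg (hg0 r hr.1 (hsub htT hr)) (hh.nonneg (hf0 r hr.1 (hsub htT hr)))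
  have hzero : K = 0 → ∀ t : ℝ, 0 ≤ t → ENNReal.ofReal t < T → f t = 0 := by
    intro hK0 t ht htT
    refine le_antisymm ?_ (hf0 t ht htT)
    have hle := hineq t ht htT
    rw [hK0, zero_add] at hle
    refine hle.trans ?_
    by_contra! hpos
    obtain ⟨ε, hε, hεG⟩ := hh.exists_osgoodG_lt
      (osgoodG h (∫ r in (0 : ℝ)..t, g r * h (f r)) - ∫ r in (0 : ℝ)..t, g r)
    have h1 := core ε (by linarith) hε t ht htT
    have h2 := osgoodG_mono hh hpos (le_add_of_nonneg_left hε.le :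
      (∫ r in (0 : ℝ)..t, g r * h (f r)) ≤ ε + ∫ r in (0 : ℝ)..t, g r * h (f r))
    linarith
  refine ⟨fun t ht htT => ?_, hzero⟩
  rcases hK.eq_or_lt with hK0 | hKpos
  · rw [hzero hK0.symm t ht htT, osgoodM, if_pos hK0.ge]
  · rw [osgoodM, if_neg hKpos.not_ge]
    exact (hineq t ht htT).trans (le_csSup (bddAbove_osgoodG hh _)
      ⟨add_pos_of_pos_of_nonneg hKpos (hI t ht htT), core K le_rfl hKpos t ht htT⟩)
end
end

section
/- Let I = [0,T], let E be a Banach space, and let g : Δ_I → E be continuous. Suppose there are constants C, h > 0, an exponent 𝔭 ∈ (0,∞), and controls w, w̃ on I such that ‖g_{st}‖_E ≤ C w̃(s,t)^{1/𝔭} for every (s,t) ∈ Δ_I with w(s,t) ≤ h. Then g has finite 𝔭-variation and there is a constant C' depending only on 𝔭 such that, for all (s,t) ∈ Δ_I, ⟦g⟧_{𝔭,[s,t]} ≤ C' (C w̃(s,t)^{1/𝔭} + h^{-1/𝔭} w(s,t)^{1/𝔭} · sup_{s ≤ u ≤ v ≤ t} ‖g_{uv}‖_E). If moreover 𝔭 ∈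 [1,∞) and g = δx for a continuous path x : I → E (g_{st} = x_t − x_s), then ⟦x⟧_{𝔭,[s,t]} ≤ 2C w̃(s,t)^{1/𝔭} (1 + h^{1/𝔭 − 1} w(s,t)^{1 − 1/𝔭}) for all (s,t) ∈ Δ_I. -/
/-!
Both estimates follow from one principle: if `‖g a b‖ ^ p` is bounded by a nonnegative combination
of controls, superadditivity bounds every partition sum by the same combination on `[s, t]`
(`varSums_le`).

For general `g`, an interval with `w a b ≤ h` contributes at most `C ^ p * w' a b` by the local
bound. On any other interval `1 ≤ w a b / h`, so it contributes at most `M ^ p / h * w a b`, where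
`M` is the supremum of `‖g‖`, finite by compactness. Taking the root gives `C' = 2 ^ (1 / p)`.

For increments of a path, an interval `[a, b]` is cut into at most `1 + w a b / h` pieces on which
`w ≤ h`, and the power-mean inequality gives
`‖x b - x a‖ ^ p ≤ (1 + w a b / h) ^ (p - 1) * (C ^ p * w' a b)` (`increment_le`). Monotonicity of
`w` makes the first factor uniform in `[a, b]`, and subadditivity of `y ↦ y ^ (1 - 1 / p)`
finishes; this argument yields the bound even without the factor `2`.
-/


open Real MeasureTheory Set Filter Topology
open scoped BigOperators ENNReal

noncomputable section

universe u

section Var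

variable {E : Type*} [NormedAddCommGroup E]

/-- The set of partition sums `(∑ ‖g_{tᵢ tᵢ₊₁}‖^q)^{1/q}` over finite partitions of `[s,t]`. -/
def varSums (q : ℝ) (g : ℝ → ℝ → E) (s t : ℝ) : Set ℝ :=
  {v | ∃ n : ℕ, ∃ u : Fin (n + 1) → ℝ, Monotone u ∧ u 0 = s ∧ u (Fin.last n) = t ∧
    v = (∑ i : Fin n, ‖g (u i.castSucc) (u i.succ)‖ ^ q) ^ (1 / q)}

/-- `q`-variation seminorm of a two-parameter map on `[s,t]`. -/
def pVar (q : ℝ) (g : ℝ → ℝ → E) (s t : ℝ) : ℝ :=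
  sSup (varSums q g s t)

/-- `g` has finite `q`-variation on `[s,t]`. -/
def FiniteVar (q : ℝ) (g : ℝ → ℝ → E) (s t : ℝ) : Prop :=
  BddAbove (varSums q g s t)

/-- A control on `[0,T]`. -/
def IsControl (T : ℝ) (w : ℝ → ℝ → ℝ) : Prop :=
  ContinuousOn (fun q : ℝ × ℝ => w q.1 q.2) {q : ℝ × ℝ | 0 ≤ q.1 ∧ q.1 ≤ q.2 ∧ q.2 ≤ T} ∧
  (∀ s : ℝ, 0 ≤ s → s ≤ T → w s s = 0) ∧
  (∀ s t : ℝ, 0 ≤ s → s ≤ t → t ≤ T → 0 ≤ w s t) ∧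
  (∀ s u t : ℝ, 0 ≤ s → s ≤ u → u ≤ t → t ≤ T → w s u + w u t ≤ w s t)

end Var

/-- Superadditivity of a control along a finite partition. -/
lemma IsControl.sum_le {T : ℝ} {w : ℝ → ℝ → ℝ} (hw : IsControl T w) :
    ∀ (n : ℕ) (u : Fin (n + 1) → ℝ), Monotone u → 0 ≤ u 0 → u (Fin.last n) ≤ T →
      ∑ i : Fin n, w (u i.castSucc) (u i.succ) ≤ w (u 0) (u (Fin.last n)) := by
  intro n
  induction n with
  | zero =>
    intro u _ h0 hT
    simpa using (hw.2.1 (u 0) h0 hT).ge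
  | succ n ih =>
    intro u hu h0 hT
    rw [Fin.sum_univ_castSucc]
    have h1 := ih (fun i => u i.castSucc) (fun i j hij => hu (by simpa using hij)) h0
      ((hu (Fin.le_last _)).trans hT)
    have h2 := hw.2.2.2 (u 0) (u (Fin.last n).castSucc) (u (Fin.last (n + 1))) h0
      (hu (Fin.zero_le _)) (hu (Fin.le_last _)) hT
    simp only [Fin.succ_castSucc, Fin.succ_last, Fin.castSucc_zero] at h1 h2 ⊢
    linarith

/-- A bound of `‖g‖ ^ p` by a combination of two controls passes to all partition sums; both
estimates of the theorem are instances. -/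
lemma varSums_le {E : Type*} [NormedAddCommGroup E] {p T : ℝ} (hp : 0 < p) {g : ℝ → ℝ → E}
    {w w' : ℝ → ℝ → ℝ} (hw : IsControl T w) (hw' : IsControl T w') {A B s t : ℝ}
    (hA : 0 ≤ A) (hB : 0 ≤ B) (hs : 0 ≤ s) (ht : t ≤ T)
    (h : ∀ a b, s ≤ a → a ≤ b → b ≤ t → ‖g a b‖ ^ p ≤ A * w' a b + B * w a b) :
    ∀ v ∈ varSums p g s t, v ≤ (A * w' s t + B * w s t) ^ (1 / p) := by
  rintro v ⟨n, u, hu, h0, hl, rfl⟩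
  apply Real.rpow_le_rpow (Finset.sum_nonneg fun i _ => by positivity) _ (by positivity)
  have h1 := hw.sum_le n u hu (by rw [h0]; exact hs) (by rw [hl]; exact ht)
  have h2 := hw'.sum_le n u hu (by rw [h0]; exact hs) (by rw [hl]; exact ht)
  rw [h0, hl] at h1 h2
  calc ∑ i : Fin n, ‖g (u i.castSucc) (u i.succ)‖ ^ p
      ≤ ∑ i : Fin n, (A * w' (u i.castSucc) (u i.succ) + B * w (u i.castSucc) (u i.succ)) := by
        refine Finset.sum_le_sum fun i _ => h _ _ ?_ (hu (Fin.castSucc_le_succ i)) ?_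
        · rw [← h0]; exact hu (Fin.zero_le _)
        · rw [← hl]; exact hu (Fin.le_last _)
    _ = A * ∑ i : Fin n, w' (u i.castSucc) (u i.succ)
          + B * ∑ i : Fin n, w (u i.castSucc) (u i.succ) := by
        rw [Finset.sum_add_distrib, Finset.mul_sum, Finset.mul_sum]
    _ ≤ _ := by gcongr

lemma bddAbove_norm {E : Type*} [NormedAddCommGroup E] {T : ℝ} {g : ℝ → ℝ → E}
    (hg : ContinuousOn (fun q : ℝ × ℝ => g q.1 q.2)
      {q : ℝ × ℝ | 0 ≤ q.1 ∧ q.1 ≤ q.2 ∧ q.2 ≤ T}) {s t : ℝ} (hs : 0 ≤ s) (ht : t ≤ T) :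
    BddAbove (range fun q : {q : ℝ × ℝ // s ≤ q.1 ∧ q.1 ≤ q.2 ∧ q.2 ≤ t} => ‖g q.1.1 q.1.2‖) := by
  have hK : IsCompact {q : ℝ × ℝ | s ≤ q.1 ∧ q.1 ≤ q.2 ∧ q.2 ≤ t} := by
    refine (isCompact_Icc (a := ((s, s) : ℝ × ℝ)) (b := (t, t))).of_isClosed_subset ?_ ?_
    · exact (isClosed_le continuous_const continuous_fst).inter
        ((isClosed_le continuous_fst continuous_snd).inter
          (isClosed_le continuous_snd continuous_const))
    · rintro ⟨a, b⟩ ⟨h1, h2, h3⟩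
      simp only at h1 h2 h3
      exact ⟨⟨h1, h1.trans h2⟩, ⟨h2.trans h3, h3⟩⟩
  have hc := (hg.mono (t := {q : ℝ × ℝ | s ≤ q.1 ∧ q.1 ≤ q.2 ∧ q.2 ≤ t})
    fun q (hq : s ≤ q.1 ∧ q.1 ≤ q.2 ∧ q.2 ≤ t) =>
      ⟨hs.trans hq.1, hq.2.1, hq.2.2.trans ht⟩).norm
  obtain ⟨M, hM⟩ := hK.bddAbove_image hc
  refine ⟨M, ?_⟩
  rintro _ ⟨q, rfl⟩
  exact hM ⟨q.1, q.2, rfl⟩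

/-- Two-term weighted power-mean inequality: the step that adds one piece to a subdivision
into `N` pieces. -/
lemma add_rpow_le {p N u v a b : ℝ} (hp : 1 ≤ p) (hN : 0 < N) (hu : 0 ≤ u) (hv : 0 ≤ v)
    (h1 : u ^ p ≤ a) (h2 : v ^ p ≤ N ^ (p - 1) * b) :
    (u + v) ^ p ≤ (N + 1) ^ (p - 1) * (a + b) := by
  have hN1 : 0 < N + 1 := by linarith
  have key := (convexOn_rpow hp).2 (mem_Ici.2 hu) (mem_Ici.2 (show 0 ≤ v / N by positivity))
    (show 0 ≤ 1 / (N + 1) by positivity) (show 0 ≤ N / (N + 1) by positivity)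
    (by field_simp; ring)
  simp only [smul_eq_mul] at key
  have e1 : 1 / (N + 1) * u + N / (N + 1) * (v / N) = (u + v) / (N + 1) := by field_simp
  rw [e1, Real.div_rpow (by positivity) hN1.le, Real.div_rpow hv hN.le] at key
  have eN : N ^ p = N ^ (p - 1) * N := by
    rw [← Real.rpow_add_one hN.ne']; ring_nf
  have eN1 : (N + 1) ^ p = (N + 1) ^ (p - 1) * (N + 1) := by
    rw [← Real.rpow_add_one hN1.ne']; ring_nf
  have hq : v ^ p / N ^ p ≤ b / N := by
    rw [eN, div_le_div_iff₀ (by positivity) hN]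
    nlinarith
  have hfin : (u + v) ^ p / (N + 1) ^ p ≤ (a + b) / (N + 1) := by
    refine key.trans ?_
    calc _ ≤ 1 / (N + 1) * a + N / (N + 1) * (b / N) := by gcongr
      _ = _ := by field_simp
  rw [div_le_div_iff₀ (by positivity) hN1, eN1] at hfin
  have : (u + v) ^ p * (N + 1) ≤ ((N + 1) ^ (p - 1) * (a + b)) * (N + 1) := by linarith
  exact le_of_mul_le_mul_right this hN1

/-- An interval with `w a b ≤ (n + 1) * h` is cut greedily into `n + 1` pieces on which the local
bound applies. -/
lemma increment_le {E : Type*} [NormedAddCommGroup E] {p T C h : ℝ} (hp : 1 ≤ p) (hC : 0 < C)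
    (hh : 0 < h) {w w' : ℝ → ℝ → ℝ} (hw : IsControl T w) (hw' : IsControl T w') {x : ℝ → E}
    (hloc : ∀ s t : ℝ, 0 ≤ s → s ≤ t → t ≤ T → w s t ≤ h →
      ‖x t - x s‖ ^ p ≤ C ^ p * w' s t) :
    ∀ (n : ℕ) (a b : ℝ), 0 ≤ a → a ≤ b → b ≤ T → w a b ≤ (n + 1) * h →
      ‖x b - x a‖ ^ p ≤ ((n : ℝ) + 1) ^ (p - 1) * (C ^ p * w' a b) := by
  intro n
  induction n with
  | zero =>
    intro a b ha hab hb hwab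
    simpa using hloc a b ha hab hb (by simpa using hwab)
  | succ n ih =>
    intro a b ha hab hb hwab
    have hw'n : 0 ≤ w' a b := hw'.2.2.1 a b ha hab hb
    -- cut at a point `c` where `w a c = h`, or at `c = b` if `w a b < h`
    obtain ⟨c, ⟨hac, hcb⟩, hc1, hc2⟩ : ∃ c ∈ Icc a b, w a c ≤ h ∧ w c b ≤ (n + 1) * h := by
      rcases le_total (w a b) h with hle | hge
      · refine ⟨b, ⟨hab, le_rfl⟩, hle, ?_⟩
        rw [hw.2.1 b (ha.trans hab) hb]
        positivity
      · have hcont : ContinuousOn (fun c => w a c) (Icc a b) := by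
          refine hw.1.comp (f := fun c : ℝ => (a, c)) (by fun_prop) ?_
          exact fun c hc => ⟨ha, hc.1, hc.2.trans hb⟩
        obtain ⟨c, hc, hcw⟩ := intermediate_value_Icc hab hcont
          (show h ∈ Icc (w a a) (w a b) from
            ⟨by rw [hw.2.1 a ha (hab.trans hb)]; exact hh.le, hge⟩)
        refine ⟨c, hc, hcw.le, ?_⟩
        have := hw.2.2.2 a c b ha hc.1 hc.2 hb
        push_cast at hwab
        simp only at hcw
        linarith
    have h1 := hloc a c ha hac (hcb.trans hb) hc1
    have h2 := ih c b (ha.trans hac) hcb hb hc2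
    have h3 := add_rpow_le hp (by positivity) (norm_nonneg _) (norm_nonneg _) h1 h2
    have hsup := hw'.2.2.2 a c b ha hac hcb hb
    have htri : ‖x b - x a‖ ≤ ‖x c - x a‖ + ‖x b - x c‖ := by
      rw [add_comm]; exact norm_sub_le_norm_sub_add_norm_sub _ _ _
    push_cast
    calc ‖x b - x a‖ ^ p ≤ (‖x c - x a‖ + ‖x b - x c‖) ^ p := by gcongr
      _ ≤ _ := h3
      _ ≤ _ := by rw [← mul_add]; gcongr

/-- Quasi-subadditivity of the power `1 / p`, valid also for `p < 1`. -/
lemma add_rpow_inv_le {p a b : ℝ} (hp : 0 < p) (ha : 0 ≤ a) (hb : 0 ≤ b) :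
    (a + b) ^ (1 / p) ≤ 2 ^ (1 / p) * (a ^ (1 / p) + b ^ (1 / p)) := by
  have hm : 0 ≤ max a b := ha.trans (le_max_left _ _)
  calc (a + b) ^ (1 / p) ≤ (2 * max a b) ^ (1 / p) := by
        apply Real.rpow_le_rpow (by positivity) _ (by positivity)
        linarith [le_max_left a b, le_max_right a b]
    _ = 2 ^ (1 / p) * max a b ^ (1 / p) := Real.mul_rpow (by norm_num) hm
    _ ≤ _ := by
        gcongr
        have h1 : 0 ≤ a ^ (1 / p) := by positivity
        have h2 : 0 ≤ b ^ (1 / p) := by positivity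
        rcases max_choice a b with h | h <;> rw [h] <;> linarith

/-- Lemma A.4: from local to global variation estimates. -/
theorem stmt16 (p : ℝ) (hp : 0 < p) :
    ∃ C' : ℝ, 0 < C' ∧
      ∀ (E : Type u) (_ : NormedAddCommGroup E) (T : ℝ), 0 ≤ T →
      ∀ (g : ℝ → ℝ → E) (Cc hh : ℝ) (w w' : ℝ → ℝ → ℝ),
        0 < Cc → 0 < hh → IsControl T w → IsControl T w' →
        ContinuousOn (fun q : ℝ × ℝ => g q.1 q.2)
          {q : ℝ × ℝ | 0 ≤ q.1 ∧ q.1 ≤ q.2 ∧ q.2 ≤ T} →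
        -- local estimate: `‖g_{st}‖ ≤ Cc · w̃(s,t)^{1/p}` whenever `w(s,t) ≤ hh`
        (∀ s t : ℝ, 0 ≤ s → s ≤ t → t ≤ T → w s t ≤ hh →
          ‖g s t‖ ≤ Cc * w' s t ^ (1 / p)) →
        -- then `g` has finite `p`-variation …
        FiniteVar p g 0 T ∧
        -- … with the global estimate
        (∀ s t : ℝ, 0 ≤ s → s ≤ t → t ≤ T →
          pVar p g s t ≤ C' * (Cc * w' s t ^ (1 / p) +
            hh ^ (-(1 / p)) * w s t ^ (1 / p) *
              ⨆ q : {q : ℝ × ℝ // s ≤ q.1 ∧ q.1 ≤ q.2 ∧ q.2 ≤ t}, ‖g q.1.1 q.1.2‖)) ∧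
        -- and, for `p ≥ 1` and increments of paths, the sharper estimate
        (1 ≤ p → ∀ x : ℝ → E, (∀ s t : ℝ, g s t = x t - x s) →
          ∀ s t : ℝ, 0 ≤ s → s ≤ t → t ≤ T →
            pVar p g s t ≤
              2 * Cc * w' s t ^ (1 / p) * (1 + hh ^ (1 / p - 1) * w s t ^ (1 - 1 / p))) := by
  refine ⟨2 ^ (1 / p), by positivity, ?_⟩
  intro E _ T hT g C h w w' hC hh hw hw' hg hloc
  have hinv : ∀ {y : ℝ}, 0 ≤ y → (y ^ (1 / p)) ^ p = y := fun {y} hy => by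
    rw [← Real.rpow_mul hy, one_div_mul_cancel hp.ne', Real.rpow_one]
  have hinv' : ∀ {y : ℝ}, 0 ≤ y → (y ^ p) ^ (1 / p) = y := fun {y} hy => by
    rw [← Real.rpow_mul hy, mul_one_div_cancel hp.ne', Real.rpow_one]
  have hlocp : ∀ s t : ℝ, 0 ≤ s → s ≤ t → t ≤ T → w s t ≤ h →
      ‖g s t‖ ^ p ≤ C ^ p * w' s t := by
    intro s t hs hst ht hwst
    have hn := hw'.2.2.1 s t hs hst ht
    calc ‖g s t‖ ^ p ≤ (C * w' s t ^ (1 / p)) ^ p := by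
          gcongr; exact hloc s t hs hst ht hwst
      _ = _ := by rw [Real.mul_rpow hC.le (by positivity), hinv hn]
  have hsup0 : ∀ s t : ℝ,
      0 ≤ ⨆ q : {q : ℝ × ℝ // s ≤ q.1 ∧ q.1 ≤ q.2 ∧ q.2 ≤ t}, ‖g q.1.1 q.1.2‖ :=
    fun s t => Real.iSup_nonneg fun _ => norm_nonneg _
  have main : ∀ s t : ℝ, 0 ≤ s → s ≤ t → t ≤ T → ∀ v ∈ varSums p g s t,
      v ≤ (C ^ p * w' s t +
        (⨆ q : {q : ℝ × ℝ // s ≤ q.1 ∧ q.1 ≤ q.2 ∧ q.2 ≤ t}, ‖g q.1.1 q.1.2‖) ^ p / h * w s t)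
          ^ (1 / p) := by
    intro s t hs hst ht
    have hM0 := hsup0 s t
    refine varSums_le hp hw hw' (by positivity) (by positivity) hs ht ?_
    intro a b hsa hab hbt
    have hwn := hw.2.2.1 a b (hs.trans hsa) hab (hbt.trans ht)
    have hwn' := hw'.2.2.1 a b (hs.trans hsa) hab (hbt.trans ht)
    rcases le_total (w a b) h with hle | hge
    · have := hlocp a b (hs.trans hsa) hab (hbt.trans ht) hle
      refine this.trans (le_add_of_nonneg_right (by positivity))
    · have hle : ‖g a b‖ ≤
          ⨆ q : {q : ℝ × ℝ // s ≤ q.1 ∧ q.1 ≤ q.2 ∧ q.2 ≤ t}, ‖g q.1.1 q.1.2‖ :=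
        le_ciSup (bddAbove_norm hg hs ht) ⟨(a, b), hsa, hab, hbt⟩
      generalize (⨆ q : {q : ℝ × ℝ // s ≤ q.1 ∧ q.1 ≤ q.2 ∧ q.2 ≤ t}, ‖g q.1.1 q.1.2‖) = M
        at hle hM0 ⊢
      calc ‖g a b‖ ^ p ≤ M ^ p := by gcongr
        _ = M ^ p / h * h := by field_simp
        _ ≤ M ^ p / h * w a b := by gcongr
        _ ≤ _ := le_add_of_nonneg_left (by positivity)
  refine ⟨⟨_, fun v hv => main 0 T le_rfl hT le_rfl v hv⟩, ?_, ?_⟩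
  · intro s t hs hst ht
    have hwn := hw.2.2.1 s t hs hst ht
    have hwn' := hw'.2.2.1 s t hs hst ht
    have hm := main s t hs hst ht
    have hM0 := hsup0 s t
    generalize (⨆ q : {q : ℝ × ℝ // s ≤ q.1 ∧ q.1 ≤ q.2 ∧ q.2 ≤ t}, ‖g q.1.1 q.1.2‖) = M
      at hm hM0 ⊢
    refine Real.sSup_le (fun v hv => (hm v hv).trans ?_) (by positivity)
    refine (add_rpow_inv_le hp (by positivity) (by positivity)).trans (le_of_eq ?_)
    rw [Real.mul_rpow (by positivity) hwn', hinv' hC.le, Real.mul_rpow (by positivity) hwn,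
      Real.div_rpow (by positivity) hh.le, hinv' hM0, Real.rpow_neg hh.le]
    ring
  · intro hp1 x hx s t hs hst ht
    have hwn := hw.2.2.1 s t hs hst ht
    have hwn' := hw'.2.2.1 s t hs hst ht
    have hloc' : ∀ s t : ℝ, 0 ≤ s → s ≤ t → t ≤ T → w s t ≤ h →
        ‖x t - x s‖ ^ p ≤ C ^ p * w' s t := by
      intro s t h1 h2 h3 h4
      rw [← hx]; exact hlocp s t h1 h2 h3 h4
    have hp1' : 1 / p ≤ 1 := by rw [div_le_one hp]; exact hp1
    have hbd := varSums_le (g := g) hp hw hw' (A := (1 + w s t / h) ^ (p - 1) * C ^ p) (B := 0)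
      (s := s) (t := t) (by positivity) le_rfl hs ht (by
        intro a b hsa hab hbt
        have ha := hs.trans hsa
        have hb := hbt.trans ht
        have hwab := hw.2.2.1 a b ha hab hb
        have hwab' := hw'.2.2.1 a b ha hab hb
        have hmono : w a b ≤ w s t := by
          have h1 := hw.2.2.2 s a t hs hsa (hab.trans hbt) ht
          have h2 := hw.2.2.2 a b t ha hab hbt ht
          have h3 := hw.2.2.1 s a hs hsa (hab.trans hb)
          have h4 := hw.2.2.1 b t (ha.trans hab) hbt ht
          linarith
        have hfl := (Nat.lt_floor_add_one (w a b / h)).le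
        have hfl2 := Nat.floor_le (div_nonneg hwab hh.le)
        have h1 := increment_le hp1 hC hh hw hw' hloc' ⌊w a b / h⌋₊ a b ha hab hb
          ((div_le_iff₀ hh).1 hfl)
        rw [hx, zero_mul, add_zero, mul_assoc]
        refine h1.trans ?_
        have h2 : (⌊w a b / h⌋₊ : ℝ) + 1 ≤ 1 + w s t / h := by
          have : w a b / h ≤ w s t / h := by gcongr
          linarith
        have hp0 : 0 ≤ p - 1 := by linarith
        gcongr)
    refine Real.sSup_le (fun v hv => (hbd v hv).trans ?_) (by positivity)
    have hq : (p - 1) * (1 / p) = 1 - 1 / p := by field_simp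
    have hW : (1 + w s t / h) ^ (1 - 1 / p) ≤ 1 + h ^ (1 / p - 1) * w s t ^ (1 - 1 / p) := by
      have := Real.rpow_add_le_add_rpow (p := 1 - 1 / p) zero_le_one (div_nonneg hwn hh.le)
        (by linarith) (by linarith [show 0 < 1 / p by positivity])
      rw [Real.one_rpow, Real.div_rpow hwn hh.le] at this
      rwa [show 1 / p - 1 = -(1 - 1 / p) by ring, Real.rpow_neg hh.le, inv_mul_eq_div]
    rw [zero_mul, add_zero, Real.mul_rpow (by positivity) hwn',
      Real.mul_rpow (by positivity) (by positivity), hinv' hC.le,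
      ← Real.rpow_mul (by positivity), hq]
    have hD : 0 ≤ C * w' s t ^ (1 / p) := by positivity
    have hR : 0 ≤ (1 + w s t / h) ^ (1 - 1 / p) := by positivity
    nlinarith [mul_le_mul_of_nonneg_left hW hD, mul_nonneg hD hR]
end
end

section
/- Let E₀, E₁, E₂, E₃ be Banach spaces with E₃ ⊆ E₂ ⊆ E₁ ⊆ E₀ and ‖φ‖_{E_j} ≤ ‖φ‖_{E_l} whenever j ≤ l and φ ∈ E_l. Let (J^η)_{η∈(0,1]} be a family of linear operators on E₀ and C > 0 a constant such that: ‖(J^η − I)φ‖_{E_j} ≤ C η^{l−j} ‖φ‖_{E_l} for all φ ∈ E_l and (j,l) ∈ {(0,1),(0,2),(1,2)}, and J^η maps E_j into E_l with ‖J^η φ‖_{E_l} ≤ C η^{−(l−j)} ‖φ‖_{E_j} for all φ ∈ E_j and (j,l) ∈ {(1,1),(1,2),(2,2),(1,3),(2,3)}. For a continuous linear functional ψ on E₀ and l ∈ {0,1,2,3}, set ‖ψ‖_{E_{−l}} := sup{|ψ(φ)| : φ ∈ E_l, ‖φ‖_{E_l} ≤ 1}. Then for all integers 1 ≤ j < l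 ≤ 3 and all continuous linear functionals ψ on E₀, ‖ψ‖_{E_{−j}} ≤ 2C ‖ψ‖_{E_{−l}}^{j/l} ‖ψ‖_{E_{−0}}^{1 − j/l}. -/
/-!
The argument is the classical one for interpolation by smoothing. For `φ ∈ S j` with `N j φ ≤ 1`,
split `ψ φ = ψ (J η φ) - ψ (J η φ - φ)`: the first term is at most `C η^{-(l-j)} ‖ψ‖_{-l}` and the
second at most `C η^j ‖ψ‖_{-0}`. The choice `η = (‖ψ‖_{-l} / ‖ψ‖_{-0})^{1/l}`, which lies in `[0, 1]`
because the dual norms decrease along the scale, makes both terms equal to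
`C ‖ψ‖_{-l}^{j/l} ‖ψ‖_{-0}^{1-j/l}`. When `‖ψ‖_{-l} = 0` this `η` vanishes and is replaced by `η → 0`.
The optimization over `η` is `le_of_forall_smoothing`, the splitting is `dualNormOn_interpolation`.
-/

open Real Set
open scoped BigOperators

noncomputable section

/-- Dual norm of a linear functional `ψ`, taken over the unit ball of the subspace `S`
for the (semi)norm `N`. -/
def dualNormOn {V : Type*} [AddCommGroup V] [Module ℝ V]
    (S : Submodule ℝ V) (N : V → ℝ) (ψ : V →ₗ[ℝ] ℝ) : ℝ :=
  sSup {x : ℝ | ∃ φ ∈ S, N φ ≤ 1 ∧ x = |ψ φ|}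

/-- Optimization over the smoothing parameter. Writing the two dual norms as powers `u ^ (p + q)`
and `v ^ (p + q)` makes the optimal parameter simply `u / v`. -/
lemma le_of_forall_smoothing {u v C x : ℝ} {p q : ℕ} (hq : q ≠ 0) (hu : 0 ≤ u) (huv : u ≤ v)
    (hC : 0 < C) (hp : p ≠ 0)
    (h : ∀ η ∈ Ioc (0 : ℝ) 1, x ≤ u ^ (p + q) * (C * η⁻¹ ^ p) + v ^ (p + q) * (C * η ^ q)) :
    x ≤ 2 * C * (u ^ q * v ^ p) := by
  rcases hu.eq_or_lt with rfl | hu0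
  · -- here the right-hand side vanishes, so `η` has to tend to `0`
    have hpq : p + q ≠ 0 := by omega
    simp only [zero_pow hq, zero_pow hpq, zero_mul, mul_zero, zero_add] at h ⊢
    have ht : Filter.Tendsto (fun η : ℝ => v ^ (p + q) * (C * η ^ q))
        (nhdsWithin 0 (Ioi 0)) (nhds 0) := by
      have hc : Continuous (fun η : ℝ => v ^ (p + q) * (C * η ^ q)) := by fun_prop
      have := hc.tendsto 0
      simp only [zero_pow hq, mul_zero] at this
      exact this.mono_left nhdsWithin_le_nhds
    refine ge_of_tendsto ht ?_
    filter_upwards [Ioc_mem_nhdsGT (zero_lt_one : (0 : ℝ) < 1)] with η hη using h η hη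
  · have hv0 : 0 < v := hu0.trans_le huv
    refine (h (u / v) ⟨by positivity, (div_le_one hv0).2 huv⟩).trans (le_of_eq ?_)
    rw [inv_div, div_pow, div_pow, pow_add, pow_add]
    field_simp
    ring

lemma dualNormOn_nonneg {V : Type*} [AddCommGroup V] [Module ℝ V]
    (S : Submodule ℝ V) (N : V → ℝ) (ψ : V →ₗ[ℝ] ℝ) : 0 ≤ dualNormOn S N ψ := by
  refine Real.sSup_nonneg ?_
  rintro x ⟨φ, -, -, rfl⟩
  exact abs_nonneg _

/-- The defining inequality of the dual norm. Boundedness of `ψ` for `N` makes the supremum finite,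
and also forces `ψ φ = 0` when the seminorm `N φ` vanishes. -/
lemma abs_le_dualNormOn_mul {V : Type*} [AddCommGroup V] [Module ℝ V]
    {S : Submodule ℝ V} {N : V → ℝ} {ψ : V →ₗ[ℝ] ℝ}
    (hhom : ∀ (c : ℝ) (φ : V), N (c • φ) = |c| * N φ) (hnn : ∀ φ, 0 ≤ N φ)
    {M : ℝ} (hM : ∀ φ ∈ S, |ψ φ| ≤ M * N φ) {φ : V} (hφ : φ ∈ S) :
    |ψ φ| ≤ dualNormOn S N ψ * N φ := by
  rcases (hnn φ).eq_or_lt with h0 | h0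
  · have := hM φ hφ
    rw [← h0] at this ⊢
    simpa using this
  · have hbdd : BddAbove {x : ℝ | ∃ φ ∈ S, N φ ≤ 1 ∧ x = |ψ φ|} := by
      refine ⟨|M|, ?_⟩
      rintro x ⟨θ, hθ, hθ1, rfl⟩
      calc |ψ θ| ≤ M * N θ := hM θ hθ
        _ ≤ |M| * N θ := mul_le_mul_of_nonneg_right (le_abs_self M) (hnn θ)
        _ ≤ |M| := mul_le_of_le_one_right (abs_nonneg M) hθ1
    have hle : |ψ ((N φ)⁻¹ • φ)| ≤ dualNormOn S N ψ := by
      refine le_csSup hbdd ⟨_, S.smul_mem _ hφ, ?_, rfl⟩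
      rw [hhom, abs_of_pos (inv_pos.2 h0), inv_mul_cancel₀ h0.ne']
    rw [map_smul, smul_eq_mul, abs_mul, abs_of_pos (inv_pos.2 h0), inv_mul_le_iff₀ h0] at hle
    linarith

/-- Interpolation between the dual norms of `(S₀, N₀)` and `(Sl, Nl)`, from smoothing operators of
approximation order `q` and smoothing order `p` on `Sj`; the scale has `q = j` and `p = l - j`. -/
lemma dualNormOn_interpolation {V : Type*} [AddCommGroup V] [Module ℝ V]
    {S₀ Sj Sl : Submodule ℝ V} {N₀ Nj Nl : V → ℝ} {ψ : V →ₗ[ℝ] ℝ}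
    {J : ℝ → V →ₗ[ℝ] V} {C : ℝ} (hC : 0 < C) {p q : ℕ} (hp : p ≠ 0) (hq : q ≠ 0)
    (hS₀ : S₀ = ⊤)
    (hhom₀ : ∀ (c : ℝ) (φ : V), N₀ (c • φ) = |c| * N₀ φ)
    (hhoml : ∀ (c : ℝ) (φ : V), Nl (c • φ) = |c| * Nl φ)
    (hnn₀ : ∀ φ, 0 ≤ N₀ φ) (hnnl : ∀ φ, 0 ≤ Nl φ)
    (hmono : ∀ φ ∈ Sl, N₀ φ ≤ Nl φ)
    (hap : ∀ η ∈ Ioc (0 : ℝ) 1, ∀ φ ∈ Sj, N₀ (J η φ - φ) ≤ C * η ^ q * Nj φ)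
    (hsm : ∀ η ∈ Ioc (0 : ℝ) 1, ∀ φ ∈ Sj, J η φ ∈ Sl ∧ Nl (J η φ) ≤ C * η⁻¹ ^ p * Nj φ)
    (hψ : ∃ M : ℝ, ∀ φ : V, |ψ φ| ≤ M * N₀ φ) {s t : ℝ}
    (hs : s = (q : ℝ) / ((p + q : ℕ) : ℝ)) (ht : t = (p : ℝ) / ((p + q : ℕ) : ℝ)) :
    dualNormOn Sj Nj ψ ≤ 2 * C * dualNormOn Sl Nl ψ ^ s * dualNormOn S₀ N₀ ψ ^ t := by
  obtain ⟨M, hM⟩ := hψ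
  set a := dualNormOn S₀ N₀ ψ with ha
  set b := dualNormOn Sl Nl ψ with hb
  have ha0 : 0 ≤ a := dualNormOn_nonneg _ _ _
  have hb0 : 0 ≤ b := dualNormOn_nonneg _ _ _
  have h0 : ∀ φ, |ψ φ| ≤ a * N₀ φ := fun φ =>
    abs_le_dualNormOn_mul hhom₀ hnn₀ (fun φ _ => hM φ) (hS₀ ▸ Submodule.mem_top)
  have h0l : ∀ φ ∈ Sl, |ψ φ| ≤ a * Nl φ := fun φ hφ =>
    (h0 φ).trans (mul_le_mul_of_nonneg_left (hmono φ hφ) ha0)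
  have hl : ∀ φ ∈ Sl, |ψ φ| ≤ b * Nl φ := fun φ hφ => abs_le_dualNormOn_mul hhoml hnnl h0l hφ
  have hba : b ≤ a := by
    refine Real.sSup_le ?_ ha0
    rintro x ⟨φ, hφ, hφ1, rfl⟩
    exact (h0l φ hφ).trans (mul_le_of_le_one_right ha0 hφ1)
  have hn : p + q ≠ 0 := by omega
  -- the `(p + q)`-th roots of the two dual norms
  set u := b ^ (((p + q : ℕ) : ℝ)⁻¹) with hu
  set v := a ^ (((p + q : ℕ) : ℝ)⁻¹) with hv
  have hub : u ^ (p + q) = b := Real.rpow_inv_natCast_pow hb0 hn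
  have hva : v ^ (p + q) = a := Real.rpow_inv_natCast_pow ha0 hn
  have hus : b ^ s = u ^ q := by
    rw [hs, hu, ← Real.rpow_mul_natCast hb0, div_eq_inv_mul]
  have hvt : a ^ t = v ^ p := by
    rw [ht, hv, ← Real.rpow_mul_natCast ha0, div_eq_inv_mul]
  have hu0 : 0 ≤ u := Real.rpow_nonneg hb0 _
  have hv0 : 0 ≤ v := Real.rpow_nonneg ha0 _
  have huv : u ≤ v := Real.rpow_le_rpow hb0 hba (by positivity)
  rw [hus, hvt, mul_assoc]
  refine Real.sSup_le ?_ (by positivity)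
  rintro x ⟨φ, hφ, hφ1, rfl⟩
  refine le_of_forall_smoothing hq hu0 huv hC hp fun η hη => ?_
  have hη0 : 0 < η := hη.1
  rw [hub, hva]
  obtain ⟨hmem, hsmη⟩ := hsm η hη φ hφ
  have hsm1 : Nl (J η φ) ≤ C * η⁻¹ ^ p :=
    hsmη.trans (mul_le_of_le_one_right (by positivity) hφ1)
  have hap1 : N₀ (J η φ - φ) ≤ C * η ^ q :=
    (hap η hη φ hφ).trans (mul_le_of_le_one_right (by positivity) hφ1)
  calc |ψ φ| = |ψ (J η φ) - ψ (J η φ - φ)| := by rw [← map_sub, sub_sub_cancel]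
    _ ≤ |ψ (J η φ)| + |ψ (J η φ - φ)| := abs_sub _ _
    _ ≤ b * (C * η⁻¹ ^ p) + a * (C * η ^ q) := add_le_add
        ((hl _ hmem).trans (mul_le_mul_of_nonneg_left hsm1 hb0))
        ((h0 _).trans (mul_le_mul_of_nonneg_left hap1 ha0))

/-- interpolation inequality for dual norms coming from a smoothing on
a scale `E₃ ⊆ E₂ ⊆ E₁ ⊆ E₀` of Banach spaces: for `1 ≤ j < l ≤ 3`,
`‖ψ‖_{−j} ≤ 2C ‖ψ‖_{−l}^{j/l} ‖ψ‖_{−0}^{1−j/l}`. -/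
theorem stmt19 {V : Type*} [AddCommGroup V] [Module ℝ V]
    (S : Fin 4 → Submodule ℝ V) (N : Fin 4 → V → ℝ)
    -- `E₀` is the ambient space and the scale is decreasing
    (hS0 : S 0 = ⊤)
    (hSmono : ∀ j l : Fin 4, j ≤ l → S l ≤ S j)
    -- each `N l` is a (semi)norm, and the norms increase along the scale
    (hNhomog : ∀ (l : Fin 4) (c : ℝ) (φ : V), N l (c • φ) = |c| * N l φ)
    (hNadd : ∀ (l : Fin 4) (φ φ' : V), N l (φ + φ') ≤ N l φ + N l φ')
    (hNnonneg : ∀ (l : Fin 4) (φ : V), 0 ≤ N l φ)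
    (hNmono : ∀ j l : Fin 4, j ≤ l → ∀ φ ∈ S l, N j φ ≤ N l φ)
    -- the smoothing operators `J^η`, `η ∈ (0,1]`, with constant `C`
    (J : ℝ → V →ₗ[ℝ] V) (C : ℝ) (hC : 0 < C)
    (hap01 : ∀ η ∈ Ioc (0 : ℝ) 1, ∀ φ ∈ S 1, N 0 (J η φ - φ) ≤ C * η * N 1 φ)
    (hap02 : ∀ η ∈ Ioc (0 : ℝ) 1, ∀ φ ∈ S 2, N 0 (J η φ - φ) ≤ C * η ^ 2 * N 2 φ)
    (hap12 : ∀ η ∈ Ioc (0 : ℝ) 1, ∀ φ ∈ S 2, N 1 (J η φ - φ) ≤ C * η * N 2 φ)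
    (hsm11 : ∀ η ∈ Ioc (0 : ℝ) 1, ∀ φ ∈ S 1, J η φ ∈ S 1 ∧ N 1 (J η φ) ≤ C * N 1 φ)
    (hsm12 : ∀ η ∈ Ioc (0 : ℝ) 1, ∀ φ ∈ S 1, J η φ ∈ S 2 ∧ N 2 (J η φ) ≤ C * η⁻¹ * N 1 φ)
    (hsm22 : ∀ η ∈ Ioc (0 : ℝ) 1, ∀ φ ∈ S 2, J η φ ∈ S 2 ∧ N 2 (J η φ) ≤ C * N 2 φ)
    (hsm13 : ∀ η ∈ Ioc (0 : ℝ) 1, ∀ φ ∈ S 1, J η φ ∈ S 3 ∧ N 3 (J η φ) ≤ C * η⁻¹ ^ 2 * N 1 φ)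
    (hsm23 : ∀ η ∈ Ioc (0 : ℝ) 1, ∀ φ ∈ S 2, J η φ ∈ S 3 ∧ N 3 (J η φ) ≤ C * η⁻¹ * N 2 φ)
    -- a continuous linear functional on `E₀`
    (ψ : V →ₗ[ℝ] ℝ) (hψ : ∃ M : ℝ, ∀ φ : V, |ψ φ| ≤ M * N 0 φ) :
    -- interpolation for all pairs `1 ≤ j < l ≤ 3`
    dualNormOn (S 1) (N 1) ψ ≤
        2 * C * dualNormOn (S 2) (N 2) ψ ^ ((1 : ℝ) / 2) *
          dualNormOn (S 0) (N 0) ψ ^ (1 - (1 : ℝ) / 2) ∧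
    dualNormOn (S 1) (N 1) ψ ≤
        2 * C * dualNormOn (S 3) (N 3) ψ ^ ((1 : ℝ) / 3) *
          dualNormOn (S 0) (N 0) ψ ^ (1 - (1 : ℝ) / 3) ∧
    dualNormOn (S 2) (N 2) ψ ≤
        2 * C * dualNormOn (S 3) (N 3) ψ ^ ((2 : ℝ) / 3) *
          dualNormOn (S 0) (N 0) ψ ^ (1 - (2 : ℝ) / 3) := by
  refine ⟨?_, ?_, ?_⟩
  · exact dualNormOn_interpolation hC (p := 1) (q := 1) one_ne_zero one_ne_zero hS0
      (hNhomog 0) (hNhomog 2) (hNnonneg 0) (hNnonneg 2) (hNmono 0 2 (by decide))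
      (by simpa only [pow_one] using hap01) (by simpa only [pow_one] using hsm12) hψ
      (by norm_num) (by norm_num)
  · exact dualNormOn_interpolation hC (p := 2) (q := 1) two_ne_zero one_ne_zero hS0
      (hNhomog 0) (hNhomog 3) (hNnonneg 0) (hNnonneg 3) (hNmono 0 3 (by decide))
      (by simpa only [pow_one] using hap01) hsm13 hψ (by norm_num) (by norm_num)
  · exact dualNormOn_interpolation hC (p := 1) (q := 2) one_ne_zero two_ne_zero hS0
      (hNhomog 0) (hNhomog 3) (hNnonneg 0) (hNnonneg 3) (hNmono 0 3 (by decide))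
      hap02 (by simpa only [pow_one] using hsm23) hψ (by norm_num) (by norm_num)
end
end
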